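/- arXiv:2402.13893 — 3 statements merged into one kernel-verified Lean document; each statement's English description precedes it below -/
import Mathlib

section
/- For every n ≥ 2 and every integer r ≥ 1, the set 𝔠_r := {λ ∈ ℝ^n : λ_1 ≥ … ≥ λ_n, λ_1+…+λ_n = 0, and C_r(O_λ) is a convex set} is a convex cone: it contains 0, is closed under addition, and is closed under multiplication by nonnegative real scalars. -/
/-- The `r`-th partial convex hull of a set `X`: the union of the convex hulls of all
`r`-tuples of points of `X`. -/
def partialConvexHull {E : Type*} [AddCommGroup E] [Module ℝ E]
    (r : ℕ) (X : Set E) : Set E :=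
  {y | ∃ f : Fin r → E, (∀ i, f i ∈ X) ∧ y ∈ convexHull ℝ (Set.range f)}

/-- The coadjoint orbit `O_λ` of `SU(n)`: the set of `n × n` complex Hermitian matrices
of trace zero whose eigenvalues, listed with multiplicity, are the entries of `lam`. -/
def coadjointOrbit {n : ℕ} (lam : Fin n → ℝ) : Set (Matrix (Fin n) (Fin n) ℂ) :=
  {A | A.trace = 0 ∧ ∃ hA : A.IsHermitian, ∃ σ : Equiv.Perm (Fin n),
      ∀ i, hA.eigenvalues (σ i) = lam i}

namespace HornAux

open Matrix

/-- Rank is invariant under field automorphisms applied entrywise. -/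
lemma rank_map_ringEquiv {n : ℕ} (σ : ℂ ≃+* ℂ) (M : Matrix (Fin n) (Fin n) ℂ) :
    (M.map σ).rank = M.rank := by
  obtain ⟨V, U, e, hV, hU, h⟩ := Matrix.exists_rank_normal_form M
  have h2 : (V.map σ) * (M.map σ) * (U.map σ) = V * M * U := by
    rw [← Matrix.map_mul, ← Matrix.map_mul, h]
    ext i j
    simp only [Matrix.map_apply, Matrix.submatrix_apply]
    rcases e i with a | a <;> rcases e j with b | b <;> simp [Matrix.one_apply]
  have hu : ∀ {W : Matrix (Fin n) (Fin n) ℂ}, IsUnit W → IsUnit (W.map σ) := by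
    intro W hW
    exact hW.map (RingHom.mapMatrix (m := Fin n) (σ : ℂ →+* ℂ))
  have e1 : (V * M * U).rank = M.rank := by
    rw [Matrix.rank_mul_eq_left_of_isUnit_det _ _ ((Matrix.isUnit_iff_isUnit_det _).1 hU),
      Matrix.rank_mul_eq_right_of_isUnit_det _ _ ((Matrix.isUnit_iff_isUnit_det _).1 hV)]
  have e2 : ((V.map σ) * (M.map σ) * (U.map σ)).rank = (M.map σ).rank := by
    rw [Matrix.rank_mul_eq_left_of_isUnit_det _ _ ((Matrix.isUnit_iff_isUnit_det _).1 (hu hU)),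
      Matrix.rank_mul_eq_right_of_isUnit_det _ _ ((Matrix.isUnit_iff_isUnit_det _).1 (hu hV))]
  rw [← e2, h2, e1]

/-- Rank is lower semicontinuous. -/
lemma isClosed_rank_le {n : ℕ} (s : ℕ) :
    IsClosed {M : Matrix (Fin n) (Fin n) ℂ | M.rank ≤ s} := by
  have h := isOpen_setOfPred_nat_le_rank (𝕜 := ℂ) (E := Fin n → ℂ) (F := Fin n → ℂ) (s + 1)
  have hc : Continuous (fun M : Matrix (Fin n) (Fin n) ℂ =>
      LinearMap.toContinuousLinearMap (Matrix.toLin' M)) := by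
    have : Continuous ((LinearMap.toContinuousLinearMap.toLinearMap ∘ₗ
      (Matrix.toLin' (R := ℂ) (m := Fin n) (n := Fin n)).toLinearMap)) :=
      LinearMap.continuous_of_finiteDimensional _
    exact this
  have h2 := (h.preimage hc).isClosed_compl
  convert h2 using 1
  ext M
  simp only [Set.mem_ofPred_eq, Set.mem_compl_iff, Set.mem_preimage, not_le]
  have : ((LinearMap.toContinuousLinearMap (Matrix.toLin' M) : (Fin n → ℂ) →L[ℂ] (Fin n → ℂ)) :
    (Fin n → ℂ) →ₗ[ℂ] (Fin n → ℂ)).rank = (M.rank : Cardinal) := by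
    rw [Matrix.rank, LinearMap.rank, Module.finrank_eq_rank]
    rfl
  rw [this]
  norm_cast
  omega

lemma isCompact_unitary (n : ℕ) :
    IsCompact {V : Matrix (Fin n) (Fin n) ℂ | V ∈ Matrix.unitaryGroup (Fin n) ℂ} := by
  have h1 : IsCompact (Set.univ.pi fun _ : Fin n => Set.univ.pi fun _ : Fin n =>
      Metric.closedBall (0 : ℂ) 1) :=
    isCompact_univ_pi fun _ => isCompact_univ_pi fun _ => isCompact_closedBall _ _
  refine h1.of_isClosed_subset ?_ ?_
  · have : {V : Matrix (Fin n) (Fin n) ℂ | V ∈ Matrix.unitaryGroup (Fin n) ℂ} =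
      {V | Vᴴ * V = 1} := by
      ext V; exact Matrix.mem_unitaryGroup_iff'
    rw [this]
    exact isClosed_eq (by fun_prop) continuous_const
  · intro V hV i _ j _
    simpa using entry_norm_bound_of_unitary hV i j

/-- QR decomposition. -/
lemma exists_qr {n : ℕ} (g : Matrix (Fin n) (Fin n) ℂ) :
    ∃ U ∈ Matrix.unitaryGroup (Fin n) ℂ, ∃ T : Matrix (Fin n) (Fin n) ℂ,
      (∀ i j, j < i → T i j = 0) ∧ g = U * T := by
  let f : Fin n → EuclideanSpace ℂ (Fin n) := fun j => WithLp.toLp 2 (fun i => g i j)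
  let b := InnerProductSpace.gramSchmidtOrthonormalBasis
    (𝕜 := ℂ) (E := EuclideanSpace ℂ (Fin n)) (ι := Fin n) (by simp) f
  let U : Matrix (Fin n) (Fin n) ℂ := (EuclideanSpace.basisFun (Fin n) ℂ).toBasis.toMatrix b.toBasis
  have hU : U ∈ Matrix.unitaryGroup (Fin n) ℂ :=
    (EuclideanSpace.basisFun (Fin n) ℂ).toMatrix_orthonormalBasis_mem_unitary b
  refine ⟨U, hU, Uᴴ * g, ?_, ?_⟩
  · intro i j hij
    have := InnerProductSpace.gramSchmidtOrthonormalBasis_inv_triangular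
      (𝕜 := ℂ) (E := EuclideanSpace ℂ (Fin n)) (ι := Fin n) (by simp) f hij
    rw [← this, Matrix.mul_apply, PiLp.inner_apply]
    refine Finset.sum_congr rfl fun k _ => ?_
    simp [U, f, b, Module.Basis.toMatrix_apply, mul_comm]
  · rw [← Matrix.mul_assoc]
    have := Matrix.mem_unitaryGroup_iff.1 hU
    rw [Matrix.star_eq_conjTranspose] at this
    rw [this, one_mul]

lemma exists_aut (k : Subfield ℂ) (z w : ℂ) (hz : Transcendental k z) (hw : Transcendental k w) :
    ∃ σ : ℂ ≃+* ℂ, (∀ s ∈ k, σ s = s) ∧ σ z = w := by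
  classical
  have key : ∀ y : ℂ, Transcendental k y → ∃ t : Set ℂ, y ∈ t ∧
      IsTranscendenceBasis k (Subtype.val : t → ℂ) := by
    intro y hy
    have : AlgebraicIndepOn k id ({y} : Set ℂ) := by
      rw [AlgebraicIndepOn, algebraicIndependent_singleton_iff ⟨y, rfl⟩]
      exact hy
    obtain ⟨t, ht, h⟩ := exists_isTranscendenceBasis_superset this
    exact ⟨t, ht rfl, h⟩
  obtain ⟨s, hzs, hs⟩ := key z hz
  obtain ⟨t, hwt, ht⟩ := key w hw
  obtain ⟨e0⟩ := Cardinal.eq.1 (hs.cardinalMk_eq ht)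
  let e : s ≃ t := e0.trans (Equiv.swap (e0 ⟨z, hzs⟩) ⟨w, hwt⟩)
  have he : e ⟨z, hzs⟩ = ⟨w, hwt⟩ := by simp [e]
  let _ := IsAlgClosed.isAlgClosure_of_transcendence_basis _ hs
  let _ := IsAlgClosed.isAlgClosure_of_transcendence_basis _ ht
  let E : Algebra.adjoin k (Set.range (Subtype.val : s → ℂ)) ≃ₐ[k]
      Algebra.adjoin k (Set.range (Subtype.val : t → ℂ)) :=
    (hs.1.aevalEquiv.symm.trans (MvPolynomial.renameEquiv k e)).trans ht.1.aevalEquiv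
  refine ⟨IsAlgClosure.equivOfEquiv ℂ ℂ E.toRingEquiv, ?_, ?_⟩
  · intro a ha
    have := IsAlgClosure.equivOfEquiv_algebraMap ℂ ℂ E.toRingEquiv (algebraMap k _ ⟨a, ha⟩)
    have h2 : E.toRingEquiv (algebraMap k _ ⟨a, ha⟩) = algebraMap k _ ⟨a, ha⟩ := E.commutes _
    rw [h2] at this
    exact this
  · have h1 : hs.1.aevalEquiv (MvPolynomial.X ⟨z, hzs⟩) =
        ⟨z, Algebra.subset_adjoin ⟨⟨z, hzs⟩, rfl⟩⟩ := by
      apply Subtype.ext; simp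
    have h2 : E ⟨z, Algebra.subset_adjoin ⟨⟨z, hzs⟩, rfl⟩⟩ =
        ⟨w, Algebra.subset_adjoin ⟨⟨w, hwt⟩, rfl⟩⟩ := by
      rw [← h1]
      apply Subtype.ext
      simp [E, he]
    have := IsAlgClosure.equivOfEquiv_algebraMap ℂ ℂ E.toRingEquiv
      ⟨z, Algebra.subset_adjoin ⟨⟨z, hzs⟩, rfl⟩⟩
    have h3 : E.toRingEquiv ⟨z, Algebra.subset_adjoin ⟨⟨z, hzs⟩, rfl⟩⟩ =
        ⟨w, Algebra.subset_adjoin ⟨⟨w, hwt⟩, rfl⟩⟩ := h2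
    rw [h3] at this
    exact this

/-- A point whose orbit under the automorphisms of `ℂ` fixing a given countable set is dense. -/
lemma exists_generic (S : Set ℂ) (hS : S.Countable) :
    ∃ z0 : ℂ, ∀ Z : Set ℂ, IsClosed Z →
      (∀ σ : ℂ ≃+* ℂ, (∀ s ∈ S, σ s = s) → σ z0 ∈ Z) → ∀ w, w ∈ Z := by
  let k := Subfield.closure S
  have hk : Countable k := by
    rw [← Cardinal.mk_le_aleph0_iff]
    refine (Subfield.cardinalMk_closure_le_max S).trans ?_
    simpa using hS
  have hc : {x : ℂ | IsAlgebraic k x}.Countable := Algebraic.countable k ℂ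
  have hd := hc.dense_compl ℂ
  obtain ⟨z0, hz0⟩ := hd.nonempty
  refine ⟨z0, fun Z hZ h w => ?_⟩
  have hsub : {x : ℂ | IsAlgebraic k x}ᶜ ⊆ Z := by
    intro x hx
    obtain ⟨σ, h1, h2⟩ := exists_aut k z0 x hz0 hx
    rw [← h2]
    exact h σ fun s hs => h1 s (Subfield.subset_closure hs)
  exact hZ.closure_subset_iff.2 hsub (hd w)

end HornAux

namespace HornAux

open Matrix

/-- Projection onto the first `k + 1` coordinates. -/
noncomputable def stepProj {n : ℕ} (k : Fin n) : Matrix (Fin n) (Fin n) ℂ :=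
  diagonal fun j => if j ≤ k then 1 else 0

/-- The average slope. -/
noncomputable def avg {n : ℕ} {ι : Type} [Fintype ι] (c : ι → Fin n → ℝ) : ℝ :=
  (∑ i, ∑ k, c i k * ((k : ℕ) + 1 : ℝ)) / n

/-- Numerical semistability of a tuple of flags with weights `c`. -/
def SS {n : ℕ} {ι : Type} [Fintype ι] (c : ι → Fin n → ℝ)
    (g : ι → Matrix (Fin n) (Fin n) ℂ) : Prop :=
  ∀ V ∈ Matrix.unitaryGroup (Fin n) ℂ, ∀ d : Fin n,
    avg c * ((d : ℕ) + 1 : ℝ) ≤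
      ∑ i, ∑ k, c i k * ((stepProj d * V * g i * stepProj k).rank : ℝ)

lemma avg_add {n : ℕ} {ι : Type} [Fintype ι] (c c' : ι → Fin n → ℝ) :
    avg (c + c') = avg c + avg c' := by
  simp only [avg, Pi.add_apply, add_mul, Finset.sum_add_distrib, add_div]

lemma SS.add {n : ℕ} {ι : Type} [Fintype ι] {c c' : ι → Fin n → ℝ}
    {g : ι → Matrix (Fin n) (Fin n) ℂ} (h : SS c g) (h' : SS c' g) : SS (c + c') g := by
  intro V hV d
  have := add_le_add (h V hV d) (h' V hV d)
  rw [avg_add, add_mul]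
  simpa only [Pi.add_apply, add_mul, Finset.sum_add_distrib] using this

lemma stepProj_map {n : ℕ} (k : Fin n) (σ : ℂ ≃+* ℂ) : (stepProj k).map σ = stepProj k := by
  ext i j
  simp only [stepProj, Matrix.map_apply, Matrix.diagonal_apply]
  split_ifs <;> simp

/-- Replace an invertible matrix by a unitary one spanning the same flag. -/
lemma exists_unitary_rank_le {n : ℕ} (V : Matrix (Fin n) (Fin n) ℂ) (hV : IsUnit V.det) :
    ∃ V' ∈ Matrix.unitaryGroup (Fin n) ℂ, ∀ (d : Fin n) (M : Matrix (Fin n) (Fin n) ℂ),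
      (stepProj d * V' * M).rank ≤ (stepProj d * V * M).rank := by
  obtain ⟨U, hU, T, hT, h⟩ := exists_qr Vᴴ
  have hUU : Uᴴ * U = 1 := Matrix.mem_unitaryGroup_iff'.1 hU
  have hTdet : IsUnit T.det := by
    have h1 : IsUnit (Vᴴ).det := by rw [Matrix.det_conjTranspose]; exact hV.star
    rw [h, Matrix.det_mul] at h1
    exact isUnit_of_mul_isUnit_right h1
  have hTb : T.BlockTriangular id := fun i j hij => hT i j hij
  have : Invertible T := Matrix.invertibleOfIsUnitDet T hTdet
  have hTi : (T⁻¹).BlockTriangular id := Matrix.blockTriangular_inv_of_blockTriangular hTb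
  have e1 : Uᴴ = (T⁻¹)ᴴ * V := by
    have : V = Tᴴ * Uᴴ := by
      rw [← Matrix.conjTranspose_mul, ← h, Matrix.conjTranspose_conjTranspose]
    rw [this, ← Matrix.mul_assoc, ← Matrix.conjTranspose_mul, Matrix.mul_nonsing_inv _ hTdet]
    simp
  refine ⟨Uᴴ, Matrix.star_eq_conjTranspose U ▸ Unitary.star_mem hU, fun d M => ?_⟩
  have e2 : stepProj d * (T⁻¹)ᴴ = stepProj d * (T⁻¹)ᴴ * stepProj d := by
    ext i j
    simp only [stepProj, Matrix.mul_diagonal, Matrix.diagonal_mul, Matrix.conjTranspose_apply]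
    by_cases h1 : i ≤ d
    · by_cases h2 : j ≤ d
      · simp [h1, h2]
      · have : (T⁻¹) j i = 0 := hTi (show id i < id j from lt_of_le_of_lt h1 (not_le.1 h2))
        simp [this]
    · simp [h1]
  have e3 : stepProj d * Uᴴ * M = (stepProj d * (T⁻¹)ᴴ) * (stepProj d * V * M) := by
    rw [e1, ← Matrix.mul_assoc (stepProj d) _ V]
    conv_lhs => rw [e2]
    simp only [Matrix.mul_assoc]
  rw [e3]
  exact Matrix.rank_mul_le_right _ _

lemma exists_generic_flags {n : ℕ} {ι : Type} [Fintype ι]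
    (U U' : ι → Matrix (Fin n) (Fin n) ℂ)
    (hU : ∀ i, U i ∈ Matrix.unitaryGroup (Fin n) ℂ) :
    ∃ g : ι → Matrix (Fin n) (Fin n) ℂ, (∀ i, IsUnit (g i).det) ∧
      (∀ c : ι → Fin n → ℝ, (∀ i k, 0 ≤ c i k) → SS c U → SS c g) ∧
      (∀ c : ι → Fin n → ℝ, (∀ i k, 0 ≤ c i k) → SS c U' → SS c g) := by
  let S : Set ℂ := (⋃ i, ⋃ a, ⋃ b, {U i a b}) ∪ (⋃ i, ⋃ a, ⋃ b, {U' i a b})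
  have hS : S.Countable := by
    refine Set.Countable.union ?_ ?_ <;>
    exact Set.countable_iUnion fun _ => Set.countable_iUnion fun _ => Set.countable_iUnion fun _ =>
      Set.countable_singleton _
  obtain ⟨z0, hz0⟩ := exists_generic S hS
  let G : ℂ → ι → Matrix (Fin n) (Fin n) ℂ := fun z i => (1 - z) • U i + z • U' i
  have hGc : ∀ i, Continuous fun z => G z i := fun i => by
    simp only [G]; fun_prop
  have hGm : ∀ σ : ℂ ≃+* ℂ, (∀ s ∈ S, σ s = s) → ∀ i, (G z0 i).map σ = G (σ z0) i := by
    intro σ hσ i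
    ext a b
    have h1 : σ (U i a b) = U i a b := hσ _ (Or.inl (by simp only [Set.mem_iUnion]; exact ⟨i, a, b, rfl⟩))
    have h2 : σ (U' i a b) = U' i a b := hσ _ (Or.inr (by simp only [Set.mem_iUnion]; exact ⟨i, a, b, rfl⟩))
    simp [G, h1, h2]
  have main : ∀ w : ℂ, ∀ c : ι → Fin n → ℝ, (∀ i k, 0 ≤ c i k) → SS c (G w) → SS c (G z0) := by
    intro w c hc hw V hV d
    let ρ : ι → Fin n → ℕ := fun i k => (stepProj d * V * G z0 i * stepProj k).rank
    let Z : Set ℂ := Prod.snd '' ({p : Matrix (Fin n) (Fin n) ℂ × ℂ |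
      p.1 ∈ Matrix.unitaryGroup (Fin n) ℂ ∧ ∀ i k,
        (stepProj d * p.1 * G p.2 i * stepProj k).rank ≤ ρ i k})
    have hZ : IsClosed Z := by
      let K := {V : Matrix (Fin n) (Fin n) ℂ | V ∈ Matrix.unitaryGroup (Fin n) ℂ}
      have : CompactSpace K := isCompact_iff_compactSpace.1 (isCompact_unitary n)
      have hcl : IsClosed {p : K × ℂ | ∀ i k,
          (stepProj d * p.1.1 * G p.2 i * stepProj k).rank ≤ ρ i k} := by
        simp only [Set.ofPred_forall]
        refine isClosed_iInter fun i => isClosed_iInter fun k => ?_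
        have hcont : Continuous fun p : K × ℂ => stepProj d * p.1.1 * G p.2 i * stepProj k := by
          have := hGc i
          fun_prop
        exact (isClosed_rank_le (ρ i k)).preimage hcont
      have := isClosedMap_snd_of_compactSpace (X := K) (Y := ℂ) _ hcl
      convert this using 1
      ext z
      constructor
      · rintro ⟨⟨A, y⟩, ⟨h1, h2⟩, rfl⟩
        exact ⟨(⟨A, h1⟩, y), h2, rfl⟩
      · rintro ⟨⟨⟨A, h1⟩, y⟩, h2, rfl⟩
        exact ⟨(A, y), ⟨h1, h2⟩, rfl⟩
    have hmem : w ∈ Z := by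
      refine hz0 Z hZ ?_ w
      intro σ hσ
      have hVu : IsUnit (V.map σ).det := by
        have h1 : IsUnit V := (Unitary.toUnits ⟨V, hV⟩).isUnit
        have h2 : IsUnit (V.map σ) := h1.map (RingHom.mapMatrix (m := Fin n) (σ : ℂ →+* ℂ))
        exact (Matrix.isUnit_iff_isUnit_det _).1 h2
      obtain ⟨V', hV', hr⟩ := exists_unitary_rank_le (V.map σ) hVu
      refine ⟨(V', σ z0), ⟨hV', fun i k => ?_⟩, rfl⟩
      have h3 := hr d (G (σ z0) i * stepProj k)
      simp only [← Matrix.mul_assoc] at h3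
      refine h3.trans (le_of_eq ?_)
      have h4 : stepProj d * V.map σ * G (σ z0) i * stepProj k =
          (stepProj d * V * G z0 i * stepProj k).map σ := by
        rw [Matrix.map_mul, Matrix.map_mul, Matrix.map_mul, stepProj_map, stepProj_map, hGm σ hσ]
      rw [h4, rank_map_ringEquiv]
    obtain ⟨⟨V', w'⟩, ⟨hV', hr⟩, h⟩ := hmem
    simp only at h
    subst h
    refine (hw V' hV' d).trans ?_
    refine Finset.sum_le_sum fun i _ => Finset.sum_le_sum fun k _ => ?_
    exact mul_le_mul_of_nonneg_left (by exact_mod_cast hr i k) (hc i k)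
  have e0 : G 0 = U := by ext i; simp [G]
  have e1 : G 1 = U' := by ext i; simp [G]
  refine ⟨G z0, fun i => ?_, ?_, ?_⟩
  · by_contra hcon
    have hdet : (G z0 i).det = 0 := by simpa using hcon
    have := hz0 {z | (G z i).det = 0} (isClosed_eq (by have := hGc i; fun_prop) continuous_const)
      (fun σ hσ => by
        have h1 : ((G z0 i).map σ).det = 0 := by
          have := RingHom.map_det (σ : ℂ →+* ℂ) (G z0 i)
          rw [hdet] at this
          simpa using this.symm
        rw [hGm σ hσ] at h1
        exact h1) 0
    have h2 : (U i).det = 0 := by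
      have h3 : (G 0 i).det = 0 := this
      rwa [e0] at h3
    have h4 : IsUnit (U i) := (Unitary.toUnits ⟨U i, hU i⟩).isUnit
    have h5 := (Matrix.isUnit_iff_isUnit_det _).1 h4
    rw [h2] at h5
    simp at h5
  · intro c hc h
    exact main 0 c hc (e0 ▸ h)
  · intro c hc h
    exact main 1 c hc (e1 ▸ h)

end HornAux

namespace HornAux

open Matrix
open scoped ComplexOrder

/-- The Horn-type equation with weights `c`. -/
def HornC {n : ℕ} {ι : Type} [Fintype ι] (c : ι → Fin n → ℝ) : Prop :=
  ∃ U : ι → Matrix (Fin n) (Fin n) ℂ, (∀ i, U i ∈ Matrix.unitaryGroup (Fin n) ℂ) ∧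
    ∑ i, ∑ k, (c i k : ℂ) • (U i * stepProj k * (U i)ᴴ) = (avg c : ℂ) • 1

lemma stepProj_herm {n : ℕ} (k : Fin n) : (stepProj k)ᴴ = stepProj k := by
  rw [stepProj, Matrix.diagonal_conjTranspose]
  congr 1
  ext j
  simp only [Pi.star_apply]
  split_ifs <;> simp

lemma stepProj_sq {n : ℕ} (k : Fin n) : stepProj k * stepProj k = stepProj k := by
  rw [stepProj, Matrix.diagonal_mul_diagonal]
  congr 1
  ext j
  split_ifs <;> simp

lemma trace_stepProj {n : ℕ} (k : Fin n) : (stepProj k).trace = ((k : ℕ) + 1 : ℂ) := by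
  rw [stepProj, Matrix.trace_diagonal]
  simp only [Finset.sum_ite, Finset.sum_const_zero, add_zero, Finset.sum_const, nsmul_eq_mul, mul_one]
  have : (Finset.univ.filter fun j : Fin n => j ≤ k) = Finset.Iic k := by ext; simp
  rw [this, Fin.card_Iic]
  push_cast; ring

lemma trace_le_rank {n : ℕ} (A : Matrix (Fin n) (Fin n) ℂ) (hA : A.PosSemidef)
    (h1 : (1 - A).PosSemidef) : A.trace.re ≤ A.rank := by
  have hle : ∀ i, hA.1.eigenvalues i ≤ 1 := by
    intro i
    have h2 := h1.re_dotProduct_nonneg (hA.1.eigenvectorBasis i).ofLp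
    rw [Matrix.sub_mulVec, dotProduct_sub, map_sub, Matrix.one_mulVec, ← hA.1.eigenvalues_eq] at h2
    have h3 : RCLike.re (star (hA.1.eigenvectorBasis i).ofLp ⬝ᵥ (hA.1.eigenvectorBasis i).ofLp) = (1:ℝ) := by
      have := hA.1.eigenvectorBasis.orthonormal.1 i
      rw [dotProduct_comm, ← EuclideanSpace.inner_eq_star_dotProduct, inner_self_eq_norm_sq, this]
      norm_num
    linarith
  rw [hA.1.trace_eq_sum_eigenvalues, hA.1.rank_eq_card_non_zero_eigs, Fintype.card_subtype]
  simp only [Complex.re_sum]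
  rw [Finset.card_filter]
  push_cast
  refine Finset.sum_le_sum fun i _ => ?_
  split_ifs with h
  · simpa using hle i
  · simp only [ne_eq, not_not] at h
    simp [h]

lemma rank_ge {n : ℕ} (W : Matrix (Fin n) (Fin n) ℂ) (hW : W ∈ Matrix.unitaryGroup (Fin n) ℂ)
    (d k : Fin n) :
    (stepProj d * (W * stepProj k * Wᴴ)).trace.re ≤ (stepProj d * W * stepProj k).rank := by
  have hWW : W * Wᴴ = 1 := Matrix.mem_unitaryGroup_iff.1 hW
  set N := stepProj d * W * stepProj k with hN
  have hNN : N * Nᴴ = stepProj d * W * stepProj k * Wᴴ * stepProj d := by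
    rw [hN, Matrix.conjTranspose_mul, Matrix.conjTranspose_mul, stepProj_herm, stepProj_herm]
    simp only [← Matrix.mul_assoc]
    rw [Matrix.mul_assoc (stepProj d * W) (stepProj k) (stepProj k), stepProj_sq]
  have h1 : (stepProj d * (W * stepProj k * Wᴴ)).trace = (N * Nᴴ).trace := by
    rw [hNN, Matrix.trace_mul_comm _ (stepProj d)]
    simp only [← Matrix.mul_assoc]
    rw [stepProj_sq]
  rw [h1, ← Matrix.rank_self_mul_conjTranspose N]
  refine trace_le_rank _ (Matrix.posSemidef_self_mul_conjTranspose N) ?_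
  have hq : ∀ k : Fin n, (1 - stepProj k) * (1 - stepProj k) = 1 - stepProj k := by
    intro k
    rw [mul_sub, sub_mul, sub_mul, stepProj_sq]; simp
  have hqh : ∀ k : Fin n, (1 - stepProj k)ᴴ = 1 - stepProj k := by
    intro k
    rw [Matrix.conjTranspose_sub, stepProj_herm]; simp
  have h2 : 1 - N * Nᴴ = (1 - stepProj d) * (1 - stepProj d)ᴴ +
      (stepProj d * W * (1 - stepProj k)) * (stepProj d * W * (1 - stepProj k))ᴴ := by
    have h3 : (stepProj d * W * (1 - stepProj k)) * (stepProj d * W * (1 - stepProj k))ᴴ =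
      stepProj d - N * Nᴴ := by
      rw [hNN, Matrix.conjTranspose_mul, Matrix.conjTranspose_mul, stepProj_herm, hqh]
      simp only [← Matrix.mul_assoc]
      rw [Matrix.mul_assoc (stepProj d * W) (1 - stepProj k), hq, mul_sub, sub_mul, sub_mul,
        mul_one, Matrix.mul_assoc (stepProj d) W, hWW, mul_one, stepProj_sq]
    rw [h3, hqh, hq]
    abel
  rw [h2]
  exact (Matrix.posSemidef_self_mul_conjTranspose _).add (Matrix.posSemidef_self_mul_conjTranspose _)

lemma SS_of_horn {n : ℕ} {ι : Type} [Fintype ι] (c : ι → Fin n → ℝ) (hc : ∀ i k, 0 ≤ c i k)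
    (U : ι → Matrix (Fin n) (Fin n) ℂ) (hU : ∀ i, U i ∈ Matrix.unitaryGroup (Fin n) ℂ)
    (h : ∑ i, ∑ k, (c i k : ℂ) • (U i * stepProj k * (U i)ᴴ) = (avg c : ℂ) • 1) : SS c U := by
  intro V hV d
  have hVV : V * Vᴴ = 1 := Matrix.mem_unitaryGroup_iff.1 hV
  have e1 : (stepProj d * (V * (∑ i, ∑ k, (c i k : ℂ) • (U i * stepProj k * (U i)ᴴ)) * Vᴴ)).trace.re
      = avg c * ((d : ℕ) + 1 : ℝ) := by
    rw [h, Matrix.mul_smul, Matrix.smul_mul, mul_one, hVV, Matrix.mul_smul, mul_one,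
      Matrix.trace_smul, trace_stepProj, smul_eq_mul, Complex.re_ofReal_mul]
    simp
  have e2 : (stepProj d * (V * (∑ i, ∑ k, (c i k : ℂ) • (U i * stepProj k * (U i)ᴴ)) * Vᴴ)).trace.re
      = ∑ i, ∑ k, c i k * (stepProj d * ((V * U i) * stepProj k * (V * U i)ᴴ)).trace.re := by
    simp only [Matrix.mul_sum, Matrix.sum_mul, Matrix.trace_sum, Complex.re_sum, Matrix.mul_smul,
      Matrix.smul_mul, Matrix.trace_smul, smul_eq_mul, Complex.re_ofReal_mul,
      Matrix.conjTranspose_mul, Matrix.mul_assoc]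
  rw [← e1, e2]
  refine Finset.sum_le_sum fun i _ => Finset.sum_le_sum fun k _ => ?_
  refine mul_le_mul_of_nonneg_left ?_ (hc i k)
  have := rank_ge (V * U i) (mul_mem hV (hU i)) d k
  rw [← Matrix.mul_assoc (stepProj d) V] at this
  exact this

end HornAux

namespace HornAux

open Matrix
open scoped ComplexOrder

lemma eig_ge_one {K : Type} [Fintype K] [DecidableEq K] (A : Matrix K K ℂ) (hA : A.IsHermitian)
    (h1 : (A - 1).PosSemidef) (i : K) : 1 ≤ hA.eigenvalues i := by
  have h2 := h1.re_dotProduct_nonneg (hA.eigenvectorBasis i).ofLp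
  rw [Matrix.sub_mulVec, dotProduct_sub, map_sub, Matrix.one_mulVec, ← hA.eigenvalues_eq] at h2
  have h3 : RCLike.re (star (hA.eigenvectorBasis i).ofLp ⬝ᵥ (hA.eigenvectorBasis i).ofLp) = (1:ℝ) := by
    have := hA.eigenvectorBasis.orthonormal.1 i
    rw [dotProduct_comm, ← EuclideanSpace.inner_eq_star_dotProduct, inner_self_eq_norm_sq, this]
    norm_num
  linarith

lemma one_le_norm_det {K : Type} [Fintype K] [DecidableEq K] (P : Matrix K K ℂ)
    (hP : P.PosSemidef) : 1 ≤ ‖(1 + P).det‖ := by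
  have hA : (1 + P).IsHermitian := Matrix.isHermitian_one.add hP.1
  rw [hA.det_eq_prod_eigenvalues, norm_prod]
  have hone : ∏ i : K, (1:ℝ) ≤ ∏ i, ‖((hA.eigenvalues i : ℝ) : ℂ)‖ := by
    refine Finset.prod_le_prod (fun _ _ => zero_le_one) fun i _ => ?_
    have := eig_ge_one (1 + P) hA (by simpa using hP) i
    rw [Complex.norm_real, Real.norm_eq_abs, abs_of_nonneg (by linarith)]
    exact this
  simpa using hone

lemma norm_det_gram_ge {n : ℕ} {K : Type} [Fintype K] [DecidableEq K] (M : Matrix (Fin n) K ℂ)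
    (e : K → Fin n) (he : Function.Injective e) :
    ‖(M.submatrix e id).det‖ ^ 2 ≤ ‖(Mᴴ * M).det‖ := by
  classical
  set B := M.submatrix e id with hB
  by_cases hdet : B.det = 0
  · rw [hdet]; simp
  have hu : IsUnit B.det := isUnit_iff_ne_zero.2 hdet
  let D : Matrix (Fin n) (Fin n) ℂ := diagonal fun j => if j ∈ Set.range e then 0 else 1
  have hD : D.PosSemidef := by
    refine Matrix.PosSemidef.diagonal ?_
    intro j
    simp only [Pi.zero_apply]
    split_ifs <;> simp
  have hR : (Mᴴ * D * M).PosSemidef := hD.conjTranspose_mul_mul_same M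
  have hsplit : Mᴴ * M = Bᴴ * B + Mᴴ * D * M := by
    ext a b
    have h0 : (Mᴴ * D * M) a b = ∑ j, star (M j a) * (if j ∈ Set.range e then 0 else 1) * M j b := by
      rw [Matrix.mul_apply]
      simp only [D, Matrix.mul_diagonal, Matrix.conjTranspose_apply]
    rw [Matrix.add_apply, h0]
    simp only [Matrix.mul_apply, Matrix.conjTranspose_apply, hB, Matrix.submatrix_apply, id]
    have h1 : ∑ x, star (M (e x) a) * M (e x) b =
        ∑ j, if j ∈ Set.range e then star (M j a) * M j b else 0 := by
      rw [← Finset.sum_filter]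
      have : (Finset.univ.filter fun j => j ∈ Set.range e) = Finset.univ.image e := by
        ext; simp
      rw [this, Finset.sum_image (fun _ _ _ _ h => he h)]
    rw [h1, ← Finset.sum_add_distrib]
    refine Finset.sum_congr rfl fun j _ => ?_
    split_ifs <;> simp
  set P := (B⁻¹)ᴴ * (Mᴴ * D * M) * B⁻¹ with hPdef
  have hP : P.PosSemidef := hR.conjTranspose_mul_mul_same _
  have hfac : Mᴴ * M = Bᴴ * (1 + P) * B := by
    have e1 : Bᴴ * (B⁻¹)ᴴ = 1 := by
      rw [← Matrix.conjTranspose_mul, Matrix.nonsing_inv_mul _ hu]; simp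
    have e2 : B⁻¹ * B = 1 := Matrix.nonsing_inv_mul _ hu
    have e3 : Bᴴ * P * B = (Bᴴ * (B⁻¹)ᴴ) * (Mᴴ * D * M) * (B⁻¹ * B) := by
      rw [hPdef]; simp only [Matrix.mul_assoc]
    rw [hsplit, mul_add, add_mul, mul_one, e3, e1, e2]
    simp
  rw [hfac, Matrix.det_mul, Matrix.det_mul, Matrix.det_conjTranspose, norm_mul, norm_mul, norm_star]
  nlinarith [one_le_norm_det P hP, norm_nonneg B.det, mul_nonneg (norm_nonneg B.det) (norm_nonneg B.det)]

/-- Leading principal submatrix. -/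
def cut {n : ℕ} (k : Fin n) (A : Matrix (Fin n) (Fin n) ℂ) :
    Matrix {j : Fin n // j ≤ k} {j : Fin n // j ≤ k} ℂ :=
  A.submatrix Subtype.val Subtype.val

lemma exists_pivot {n : ℕ} (N : Matrix (Fin n) (Fin n) ℂ) (hN : IsUnit N.det) (k : Fin n) :
    ∃ e : {j : Fin n // j ≤ k} → Fin n, Function.Injective e ∧
      (N.submatrix e Subtype.val).det ≠ 0 ∧
      ∀ d : Fin n, (stepProj d * N * stepProj k).rank ≤
        (Finset.univ.filter fun a => e a ≤ d).card := by
  classical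
  let K := {j : Fin n // j ≤ k}
  let N' : Matrix (Fin n) K ℂ := N.submatrix id Subtype.val
  let r : Fin n → (K → ℂ) := fun j => N' j
  let J : Set (Fin n) := {j | r j ∉ Submodule.span ℂ (r '' {i | i < j})}
  have ind : ∀ e : ℕ, e ≤ n →
      Submodule.span ℂ (r '' {j | (j : ℕ) < e}) = Submodule.span ℂ (r '' {j | j ∈ J ∧ (j : ℕ) < e}) ∧
      LinearIndepOn ℂ r {j | j ∈ J ∧ (j : ℕ) < e} := by
    intro e
    induction e with
    | zero => intro _; simp
    | succ e ih =>
      intro he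
      obtain ⟨ih1, ih2⟩ := ih (by omega)
      let x : Fin n := ⟨e, by omega⟩
      have hx1 : {j : Fin n | (j : ℕ) < e + 1} = insert x {j : Fin n | (j : ℕ) < e} := by
        ext j; simp [x, Fin.ext_iff]; omega
      have hx0 : {i : Fin n | i < x} = {j : Fin n | (j : ℕ) < e} := by
        ext j; simp [x, Fin.lt_def]
      by_cases hxJ : x ∈ J
      · have hx2 : {j : Fin n | j ∈ J ∧ (j : ℕ) < e + 1} = insert x {j | j ∈ J ∧ (j : ℕ) < e} := by
          ext j
          simp only [Set.mem_ofPred_eq, Set.mem_insert_iff]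
          constructor
          · rintro ⟨h1, h2⟩
            by_cases h : (j : ℕ) = e
            · left; exact Fin.ext h
            · right; exact ⟨h1, by omega⟩
          · rintro (rfl | ⟨h1, h2⟩)
            · exact ⟨hxJ, by simp [x]⟩
            · exact ⟨h1, by omega⟩
        rw [hx1, hx2]
        refine ⟨?_, ?_⟩
        · rw [Set.image_insert_eq, Set.image_insert_eq, Submodule.span_insert, Submodule.span_insert, ih1]
        · refine ih2.insert ?_
          rw [← ih1, ← hx0]
          exact hxJ
      · have hx2 : {j : Fin n | j ∈ J ∧ (j : ℕ) < e + 1} = {j | j ∈ J ∧ (j : ℕ) < e} := by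
          ext j
          simp only [Set.mem_ofPred_eq]
          constructor
          · rintro ⟨h1, h2⟩
            refine ⟨h1, ?_⟩
            by_contra h
            have : j = x := Fin.ext (by simp only [x]; omega)
            exact hxJ (this ▸ h1)
          · rintro ⟨h1, h2⟩
            exact ⟨h1, by omega⟩
        rw [hx1, hx2]
        refine ⟨?_, ih2⟩
        rw [Set.image_insert_eq, Submodule.span_insert_eq_span, ih1]
        rw [← hx0]
        by_contra hcon
        exact hxJ hcon
  -- rank of `N'`
  have hcol : LinearIndependent ℂ N.col :=
    Matrix.linearIndependent_cols_iff_isUnit.2 ((Matrix.isUnit_iff_isUnit_det _).2 hN)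
  have hN'rank : N'.rank = Fintype.card K := by
    have h1 : LinearIndependent ℂ (N'ᵀ).row :=
      hcol.comp (Subtype.val : K → Fin n) Subtype.val_injective
    have h2 := h1.rank_matrix
    rwa [Matrix.rank_transpose] at h2
  obtain ⟨hs, hli⟩ := ind n le_rfl
  have hall : {j : Fin n | j ∈ J ∧ (j : ℕ) < n} = J := by ext j; simp
  have hall2 : {j : Fin n | (j : ℕ) < n} = Set.univ := by ext j; simp
  rw [hall, hall2, Set.image_univ] at hs
  rw [hall] at hli
  have hcardJ : Fintype.card J = Fintype.card K := by
    have h1 := finrank_span_eq_card hli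
    rw [← hN'rank, Matrix.rank_eq_finrank_span_row, ← h1]
    have : Set.range (fun x : J => r x) = r '' J := by
      rw [Set.image_eq_range]
    rw [this, ← hs]
    rfl
  let E : K ≃ J := Fintype.equivOfCardEq hcardJ.symm
  refine ⟨fun a => (E a : Fin n), fun a b h => E.injective (Subtype.ext h), ?_, ?_⟩
  · have h1 : LinearIndependent ℂ (N.submatrix (fun a => (E a : Fin n)) Subtype.val : Matrix K K ℂ).row :=
      LinearIndependent.comp hli E E.injective
    have h2 := Matrix.linearIndependent_rows_iff_isUnit.1 h1
    exact ((Matrix.isUnit_iff_isUnit_det _).1 h2).ne_zero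
  · intro d
    let P : Matrix K (Fin n) ℂ := Matrix.of fun a j => if (a : Fin n) = j then 1 else 0
    have hfac : stepProj d * N * stepProj k = (stepProj d * N') * P := by
      rw [Matrix.mul_assoc, Matrix.mul_assoc]
      congr 1
      ext i j
      have h0 : (N * stepProj k) i j = N i j * (if j ≤ k then 1 else 0) := by
        rw [stepProj, Matrix.mul_diagonal]
      have h0' : (N' * P) i j = ∑ a : K, if (a : Fin n) = j then N i a else 0 := by
        rw [Matrix.mul_apply]
        refine Finset.sum_congr rfl fun a _ => ?_
        simp only [P, Matrix.of_apply, N', Matrix.submatrix_apply, id, mul_ite, mul_one, mul_zero]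
      rw [h0, h0']
      by_cases hj : j ≤ k
      · rw [Finset.sum_eq_single (⟨j, hj⟩ : K)]
        · simp [hj]
        · intro b _ hb
          rw [if_neg]
          intro h
          exact hb (Subtype.ext h)
        · simp
      · rw [if_neg hj, mul_zero, Finset.sum_eq_zero]
        intro a _
        rw [if_neg]
        intro h
        exact hj (h ▸ a.2)
    rw [hfac]
    refine (Matrix.rank_mul_le_left _ _).trans ?_
    rw [Matrix.rank_eq_finrank_span_row]
    let F : Finset (Fin n) := Finset.univ.filter fun j => j ∈ J ∧ (j : ℕ) < d + 1
    have hF : Submodule.span ℂ (Set.range (stepProj d * N').row) ≤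
        Submodule.span ℂ ((F.image r : Finset (K → ℂ)) : Set (K → ℂ)) := by
      have h1 : ((F.image r : Finset (K → ℂ)) : Set (K → ℂ)) = r '' {j | j ∈ J ∧ (j : ℕ) < d + 1} := by
        simp [F]
      rw [h1, ← (ind (d + 1) (by omega)).1, Submodule.span_le]
      rintro _ ⟨j, rfl⟩
      have hrow : (stepProj d * N').row j = (if j ≤ d then (1:ℂ) else 0) • r j := by
        ext a
        simp only [stepProj, Matrix.row, Matrix.diagonal_mul, Pi.smul_apply, smul_eq_mul]
        rfl
      rw [hrow]
      split_ifs with hjd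
      · rw [one_smul]
        exact Submodule.subset_span ⟨j, by simp only [Set.mem_ofPred_eq]; exact Nat.lt_succ_of_le hjd, rfl⟩
      · rw [zero_smul]; exact Submodule.zero_mem _
    refine (Submodule.finrank_mono hF).trans ?_
    refine (finrank_span_finset_le_card _).trans (Finset.card_image_le.trans ?_)
    have hFsub : F ⊆ (Finset.univ.filter fun a : K => (E a : Fin n) ≤ d).image (fun a => (E a : Fin n)) := by
      intro j hj
      simp only [F, Finset.mem_filter, Finset.mem_univ, true_and] at hj
      simp only [Finset.mem_image, Finset.mem_filter, Finset.mem_univ, true_and]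
      refine ⟨E.symm ⟨j, hj.1⟩, ?_, ?_⟩
      · simp only [Equiv.apply_symm_apply]; exact Nat.lt_succ_iff.1 hj.2
      · simp
    exact (Finset.card_le_card hFsub).trans Finset.card_image_le

end HornAux

namespace HornAux

open Matrix
open scoped ComplexOrder

lemma antitone_decomp {n : ℕ} (y : Fin n → ℝ) (hy : Antitone y) :
    ∃ s : ℝ, ∃ b : Fin n → ℝ, (∀ d, 0 ≤ b d) ∧
      ∀ j, y j = s + ∑ d, b d * (if j ≤ d then 1 else 0) := by
  rcases Nat.eq_zero_or_pos n with rfl | hn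
  · exact ⟨0, fun _ => 0, fun _ => le_rfl, fun j => j.elim0⟩
  let Y : ℕ → ℝ := fun i => y ⟨min i (n - 1), by omega⟩
  have hY : ∀ j : Fin n, Y j = y j := fun j => by
    simp only [Y]; congr 1; ext; simp; omega
  refine ⟨Y n, fun d => Y d - Y (d + 1), fun d => ?_, fun j => ?_⟩
  · rw [sub_nonneg]
    apply hy
    rw [Fin.le_def]; simp
  · have h1 : ∀ m ≥ (j : ℕ), ∑ d ∈ Finset.range m, (Y d - Y (d + 1)) * (if (j : ℕ) ≤ d then 1 else 0) = Y j - Y m := by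
      intro m hm
      induction m, hm using Nat.le_induction with
      | base =>
        rw [sub_self]
        refine Finset.sum_eq_zero fun d hd => ?_
        rw [Finset.mem_range] at hd
        rw [if_neg (by omega), mul_zero]
      | succ m hm ih =>
        rw [Finset.sum_range_succ, ih, if_pos hm]; ring
    have h2 := Fin.sum_univ_eq_sum_range (fun d => (Y d - Y (d + 1)) * (if (j : ℕ) ≤ d then (1:ℝ) else 0)) n
    simp only [Fin.le_def]
    rw [h2, h1 n j.2.le, hY]
    ring

lemma unitary_submatrix {n : ℕ} (U : Matrix (Fin n) (Fin n) ℂ) (hU : U ∈ Matrix.unitaryGroup (Fin n) ℂ)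
    (σ : Equiv.Perm (Fin n)) : U.submatrix id σ ∈ Matrix.unitaryGroup (Fin n) ℂ := by
  rw [Matrix.mem_unitaryGroup_iff'] at hU ⊢
  rw [Matrix.star_eq_conjTranspose] at hU ⊢
  rw [Matrix.conjTranspose_submatrix, ← Matrix.submatrix_mul _ _ σ id σ Function.bijective_id, hU]
  simp

lemma diag_perm {n : ℕ} (U : Matrix (Fin n) (Fin n) ℂ) (x : Fin n → ℂ)
    (σ : Equiv.Perm (Fin n)) :
    U.submatrix id σ * diagonal (x ∘ σ) * (U.submatrix id σ)ᴴ = U * diagonal x * Uᴴ := by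
  ext a b
  rw [Matrix.mul_apply, Matrix.mul_apply]
  simp only [Matrix.mul_diagonal, Matrix.conjTranspose_apply, Matrix.submatrix_apply, id, Function.comp]
  exact Equiv.sum_comp σ fun j => U a j * x j * star (U b j)

lemma exists_sort {n : ℕ} (x : Fin n → ℝ) : ∃ σ : Equiv.Perm (Fin n), Antitone (x ∘ σ) := by
  refine ⟨Tuple.sort (fun j => - x j), fun a b hab => ?_⟩
  have := Tuple.monotone_sort (fun j => - x j) hab
  simpa using this

lemma spectral {n : ℕ} (A : Matrix (Fin n) (Fin n) ℂ) (hA : A.IsHermitian) :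
    ∃ U ∈ Matrix.unitaryGroup (Fin n) ℂ, A = U * diagonal (fun j => (hA.eigenvalues j : ℂ)) * Uᴴ := by
  refine ⟨hA.eigenvectorUnitary, hA.eigenvectorUnitary.2, ?_⟩
  conv_lhs => rw [hA.spectral_theorem]
  rw [Unitary.conjStarAlgAut_apply]
  rfl

/-- Sorted spectral theorem. -/
lemma spectral_sorted {n : ℕ} (A : Matrix (Fin n) (Fin n) ℂ) (hA : A.IsHermitian) :
    ∃ U ∈ Matrix.unitaryGroup (Fin n) ℂ, ∃ σ : Equiv.Perm (Fin n), 
      Antitone (hA.eigenvalues ∘ σ) ∧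
      A = U * diagonal (fun j => (hA.eigenvalues (σ j) : ℂ)) * Uᴴ := by
  obtain ⟨U, hU, h⟩ := spectral A hA
  obtain ⟨σ, hσ⟩ := exists_sort hA.eigenvalues
  refine ⟨U.submatrix id σ, unitary_submatrix U hU σ, σ, hσ, ?_⟩
  conv_lhs => rw [h]
  exact (diag_perm U (fun j => (hA.eigenvalues j : ℂ)) σ).symm

/-- The Kempf–Ness type function. -/
noncomputable def Phi {n : ℕ} {ι : Type} [Fintype ι] (c : ι → Fin n → ℝ)
    (g : ι → Matrix (Fin n) (Fin n) ℂ) (h : Matrix (Fin n) (Fin n) ℂ) : ℝ :=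
  ∑ i, ∑ k, c i k * Real.log ‖(cut k ((h * g i)ᴴ * (h * g i))).det‖

lemma sum_ind_card {n : ℕ} {K : Type} [Fintype K] (e : K → Fin n) (d : Fin n) :
    ∑ a : K, (if e a ≤ d then (1:ℝ) else 0) = ((Finset.univ.filter fun a => e a ≤ d).card : ℝ) := by
  simp

lemma sum_le_ind {n : ℕ} (d : Fin n) :
    ∑ j : Fin n, (if j ≤ d then (1:ℝ) else 0) = (d : ℕ) + 1 := by
  rw [Finset.sum_boole]
  have : (Finset.univ.filter fun a => a ≤ d) = Finset.Iic d := by ext; simp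
  rw [this, Fin.card_Iic]
  push_cast; ring

lemma weight_nonneg {n : ℕ} {ι : Type} [Fintype ι] (c : ι → Fin n → ℝ) (hc : ∀ i k, 0 ≤ c i k)
    (g : ι → Matrix (Fin n) (Fin n) ℂ) (hSS : SS c g)
    (V : Matrix (Fin n) (Fin n) ℂ) (hV : V ∈ Matrix.unitaryGroup (Fin n) ℂ)
    (e : ∀ (_ : ι) (k : Fin n), {j : Fin n // j ≤ k} → Fin n)
    (he : ∀ i k d, (stepProj d * V * g i * stepProj k).rank ≤
        (Finset.univ.filter fun a => e i k a ≤ d).card)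
    (y : Fin n → ℝ) (hy : Antitone y) (hy0 : ∑ j, y j = 0) :
    0 ≤ ∑ i, ∑ k, c i k * ∑ a, y (e i k a) := by
  rcases Nat.eq_zero_or_pos n with rfl | hn
  · simp
  obtain ⟨s, b, hb, hyd⟩ := antitone_decomp y hy
  have h1 : ∀ i k, ∑ a, y (e i k a) = s * ((k : ℕ) + 1) +
      ∑ d, b d * ((Finset.univ.filter fun a => e i k a ≤ d).card : ℝ) := by
    intro i k
    simp only [hyd, Finset.sum_add_distrib]
    congr 1
    · simp [Fintype.card_subtype]
      have : (Finset.univ.filter fun a => a ≤ k) = Finset.Iic k := by ext; simp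
      rw [this, Fin.card_Iic]; push_cast; ring
    · rw [Finset.sum_comm]
      refine Finset.sum_congr rfl fun d _ => ?_
      rw [← Finset.mul_sum, sum_ind_card]
  have h2 : (n : ℝ) * s + ∑ d : Fin n, b d * ((d : ℕ) + 1) = 0 := by
    rw [← hy0]
    simp only [hyd, Finset.sum_add_distrib]
    congr 1
    · simp
    · rw [Finset.sum_comm]
      refine Finset.sum_congr rfl fun d _ => ?_
      rw [← Finset.mul_sum, sum_le_ind]
  have h3 : ∑ i, ∑ k, c i k * ((k : ℕ) + 1 : ℝ) = n * avg c := by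
    rw [avg]; field_simp
  calc (0:ℝ) = avg c * ((n : ℝ) * s + ∑ d : Fin n, b d * ((d : ℕ) + 1)) := by rw [h2, mul_zero]
    _ = s * (n * avg c) + ∑ d : Fin n, b d * (avg c * ((d : ℕ) + 1)) := by
      rw [mul_add, Finset.mul_sum]
      congr 1
      · ring
      · refine Finset.sum_congr rfl fun d _ => ?_
        ring
    _ ≤ s * (n * avg c) + ∑ d : Fin n, b d * (∑ i, ∑ k, c i k * ((stepProj d * V * g i * stepProj k).rank : ℝ)) := by
      gcongr with d
      · exact hb d
      · exact hSS V hV d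
    _ ≤ s * (n * avg c) + ∑ d : Fin n, b d * (∑ i, ∑ k, c i k * ((Finset.univ.filter fun a => e i k a ≤ d).card : ℝ)) := by
      gcongr with d _ i _ k
      · exact hb d
      · exact hc i k
      · exact he i k d
    _ = _ := by
      simp only [h1, mul_add (c _ _), Finset.sum_add_distrib]
      rw [← h3]
      congr 1
      · rw [Finset.mul_sum]
        refine Finset.sum_congr rfl fun i _ => ?_
        rw [Finset.mul_sum]
        refine Finset.sum_congr rfl fun k _ => ?_
        ring
      · calc _ = ∑ d : Fin n, ∑ i, ∑ k, c i k * (b d * ((Finset.univ.filter fun a => e i k a ≤ d).card : ℝ)) := by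
              refine Finset.sum_congr rfl fun d _ => ?_
              rw [Finset.mul_sum]
              refine Finset.sum_congr rfl fun i _ => ?_
              rw [Finset.mul_sum]
              refine Finset.sum_congr rfl fun k _ => ?_
              ring
          _ = ∑ i, ∑ d : Fin n, ∑ k, c i k * (b d * ((Finset.univ.filter fun a => e i k a ≤ d).card : ℝ)) :=
              Finset.sum_comm
          _ = _ := by
              refine Finset.sum_congr rfl fun i _ => ?_
              refine Finset.sum_comm.trans ?_
              refine Finset.sum_congr rfl fun k _ => ?_
              rw [Finset.mul_sum]

/-- `diag (exp (y/2)) * V`. -/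
noncomputable def expV {n : ℕ} (y : Fin n → ℝ) (V : Matrix (Fin n) (Fin n) ℂ) : Matrix (Fin n) (Fin n) ℂ :=
  diagonal (fun j => (Real.exp (y j / 2) : ℂ)) * V

lemma cut_gram {n : ℕ} (k : Fin n) (M : Matrix (Fin n) (Fin n) ℂ) :
    cut k (Mᴴ * M) = (M.submatrix id (Subtype.val : {j // j ≤ k} → Fin n))ᴴ *
      (M.submatrix id (Subtype.val : {j // j ≤ k} → Fin n)) := by
  ext a b
  simp only [cut, Matrix.submatrix_apply, Matrix.mul_apply, Matrix.conjTranspose_apply, id]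

lemma log_cut_ge {n : ℕ} (y : Fin n → ℝ) (V g : Matrix (Fin n) (Fin n) ℂ) (k : Fin n)
    (e : {j : Fin n // j ≤ k} → Fin n) (he : Function.Injective e) (δ : ℝ) (hδ : 0 < δ)
    (hdet : δ ≤ ‖((V * g).submatrix e Subtype.val).det‖) :
    ∑ a, y (e a) + Real.log (δ ^ 2) ≤ Real.log ‖(cut k ((expV y V * g)ᴴ * (expV y V * g))).det‖ := by
  have h1 := norm_det_gram_ge ((expV y V * g).submatrix id (Subtype.val : {j // j ≤ k} → Fin n)) e he
  rw [← cut_gram] at h1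
  have h2 : ((expV y V * g).submatrix id (Subtype.val : {j // j ≤ k} → Fin n)).submatrix e id =
      diagonal (fun a => (Real.exp (y (e a) / 2) : ℂ)) * (V * g).submatrix e Subtype.val := by
    ext a b
    rw [Matrix.diagonal_mul, expV, Matrix.mul_assoc]
    simp only [Matrix.submatrix_apply, id]
    rw [Matrix.diagonal_mul]
  have h3 : ‖(((expV y V * g).submatrix id (Subtype.val : {j // j ≤ k} → Fin n)).submatrix e id).det‖ ^ 2 =
      Real.exp (∑ a, y (e a)) * ‖((V * g).submatrix e Subtype.val).det‖ ^ 2 := by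
    rw [h2, Matrix.det_mul, Matrix.det_diagonal, norm_mul, norm_prod, mul_pow, ← Finset.prod_pow, Real.exp_sum]
    congr 1
    refine Finset.prod_congr rfl fun a _ => ?_
    rw [Complex.norm_real, Real.norm_eq_abs, abs_of_pos (Real.exp_pos _), ← Real.exp_nat_mul]
    congr 1
    push_cast; ring
  rw [h3] at h1
  have h4 : Real.exp (∑ a, y (e a)) * δ ^ 2 ≤ ‖(cut k ((expV y V * g)ᴴ * (expV y V * g))).det‖ := by
    refine le_trans ?_ h1
    gcongr
  have h5 := Real.log_le_log (by positivity) h4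
  rwa [Real.log_mul (by positivity) (by positivity), Real.log_exp] at h5

lemma bdd_expV {n : ℕ} {ι : Type} [Fintype ι] (c : ι → Fin n → ℝ) (hc : ∀ i k, 0 ≤ c i k)
    (g : ι → Matrix (Fin n) (Fin n) ℂ) (hg : ∀ i, IsUnit (g i).det) (hSS : SS c g) :
    ∃ B : ℝ, ∀ V ∈ {V | V ∈ Matrix.unitaryGroup (Fin n) ℂ}, ∀ y : Fin n → ℝ, Antitone y → ∑ j, y j = 0 →
      -B ≤ Phi c g (expV y V) := by
  classical
  refine (isCompact_unitary n).induction_on (p := fun S => ∃ B : ℝ, ∀ V ∈ S, ∀ y : Fin n → ℝ,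
    Antitone y → ∑ j, y j = 0 → -B ≤ Phi c g (expV y V)) ?_ ?_ ?_ ?_
  · exact ⟨0, by simp⟩
  · rintro S T hST ⟨B, hB⟩
    exact ⟨B, fun V hV => hB V (hST hV)⟩
  · rintro S T ⟨B, hB⟩ ⟨B', hB'⟩
    refine ⟨max B B', ?_⟩
    rintro V (hV | hV) y hy hy0
    · exact le_trans (neg_le_neg (le_max_left _ _)) (hB V hV y hy hy0)
    · exact le_trans (neg_le_neg (le_max_right _ _)) (hB' V hV y hy hy0)
  · intro V0 hV0
    have hV0' : V0 ∈ Matrix.unitaryGroup (Fin n) ℂ := hV0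
    have hdet : ∀ i, IsUnit (V0 * g i).det := by
      intro i
      rw [Matrix.det_mul]
      refine IsUnit.mul ?_ (hg i)
      exact (Matrix.isUnit_iff_isUnit_det _).1 (IsUnit.of_mul_eq_one _ (Matrix.mem_unitaryGroup_iff.1 hV0'))
    choose e he1 he2 he3 using fun i k => exists_pivot (V0 * g i) (hdet i) k
    let δ : ι → Fin n → ℝ := fun i k => ‖((V0 * g i).submatrix (e i k) Subtype.val).det‖ / 2
    have hδ : ∀ i k, 0 < δ i k := fun i k => half_pos (norm_pos_iff.2 (he2 i k))
    have hev : ∀ᶠ V in nhds V0, ∀ i k, δ i k < ‖((V * g i).submatrix (e i k) Subtype.val).det‖ := by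
      rw [Filter.eventually_all]; intro i
      rw [Filter.eventually_all]; intro k
      have hcont : Continuous fun V : Matrix (Fin n) (Fin n) ℂ =>
          ‖((V * g i).submatrix (e i k) (Subtype.val : {j // j ≤ k} → Fin n)).det‖ := by
        refine Continuous.norm (Continuous.matrix_det ?_)
        exact Continuous.matrix_submatrix (by fun_prop) _ _
      refine hcont.continuousAt.eventually (lt_mem_nhds ?_)
      exact half_lt_self (norm_pos_iff.2 (he2 i k))
    refine ⟨_, mem_nhdsWithin_of_mem_nhds hev, -∑ i, ∑ k, c i k * Real.log (δ i k ^ 2), ?_⟩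
    intro V hV y hy hy0
    rw [neg_neg]
    have hw := weight_nonneg c hc g hSS V0 hV0' e (fun i k d => by
      have := he3 i k d
      rwa [← Matrix.mul_assoc] at this) y hy hy0
    calc _ ≤ ∑ i, ∑ k, c i k * ∑ a, y (e i k a) + ∑ i, ∑ k, c i k * Real.log (δ i k ^ 2) := by linarith
      _ = ∑ i, ∑ k, c i k * (∑ a, y (e i k a) + Real.log (δ i k ^ 2)) := by
        simp only [mul_add, Finset.sum_add_distrib]
      _ ≤ _ := by
        unfold Phi
        gcongr with i _ k
        · exact hc i k
        · exact log_cut_ge y V (g i) k (e i k) (he1 i k) (δ i k) (hδ i k) (hV i k).le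

lemma exists_expV {n : ℕ} (h : Matrix (Fin n) (Fin n) ℂ) (hh : ‖h.det‖ = 1) :
    ∃ V ∈ Matrix.unitaryGroup (Fin n) ℂ, ∃ y : Fin n → ℝ, Antitone y ∧ ∑ j, y j = 0 ∧
      hᴴ * h = (expV y V)ᴴ * expV y V := by
  have hu : IsUnit h := by
    rw [Matrix.isUnit_iff_isUnit_det, isUnit_iff_ne_zero]
    intro h0; rw [h0] at hh; simp at hh
  have hpd : (hᴴ * h).PosDef := by
    exact Matrix.PosDef.conjTranspose_mul_self h (Matrix.mulVec_injective_iff_isUnit.2 hu)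
  obtain ⟨U, hU, σ, hσ, hE⟩ := spectral_sorted (hᴴ * h) hpd.1
  have hpos : ∀ j, 0 < hpd.1.eigenvalues j := hpd.eigenvalues_pos
  refine ⟨Uᴴ, ?_, fun j => Real.log (hpd.1.eigenvalues (σ j)), ?_, ?_, ?_⟩
  · rw [← Matrix.star_eq_conjTranspose]
    exact Unitary.star_mem hU
  · intro a b hab
    exact Real.log_le_log (hpos _) (hσ hab)
  · have h1 : ‖(hᴴ * h).det‖ = 1 := by
      rw [Matrix.det_mul, Matrix.det_conjTranspose, norm_mul, norm_star, hh, mul_one]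
    rw [hpd.1.det_eq_prod_eigenvalues, norm_prod] at h1
    have h2 : ∏ j, hpd.1.eigenvalues j = 1 := by
      rw [← h1]
      refine Finset.prod_congr rfl fun j _ => ?_
      exact ((RCLike.norm_ofReal _).trans (abs_of_pos (hpos j))).symm
    rw [Equiv.sum_comp σ (fun j => Real.log (hpd.1.eigenvalues j)), ← Real.log_prod (fun j _ => (hpos j).ne'), h2, Real.log_one]
  · refine hE.trans ?_
    rw [expV, Matrix.conjTranspose_mul, Matrix.conjTranspose_conjTranspose, Matrix.diagonal_conjTranspose]
    have : ∀ A B C D : Matrix (Fin n) (Fin n) ℂ, A * B * (C * D) = A * (B * C) * D := by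
      intros; simp only [Matrix.mul_assoc]
    rw [this, Matrix.diagonal_mul_diagonal]
    congr 3
    ext j
    simp only [Pi.star_apply]
    have h1 : star ((Real.exp (Real.log (hpd.1.eigenvalues (σ j)) / 2) : ℝ) : ℂ) = ((Real.exp (Real.log (hpd.1.eigenvalues (σ j)) / 2) : ℝ) : ℂ) := by
      exact Complex.conj_ofReal _
    rw [h1, ← Complex.ofReal_mul, ← Real.exp_add, add_halves, Real.exp_log (hpos _)]

lemma bdd_Phi {n : ℕ} {ι : Type} [Fintype ι] (c : ι → Fin n → ℝ) (hc : ∀ i k, 0 ≤ c i k)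
    (g : ι → Matrix (Fin n) (Fin n) ℂ) (hg : ∀ i, IsUnit (g i).det) (hSS : SS c g) :
    ∃ B : ℝ, ∀ h : Matrix (Fin n) (Fin n) ℂ, ‖h.det‖ = 1 → -B ≤ Phi c g h := by
  obtain ⟨B, hB⟩ := bdd_expV c hc g hg hSS
  refine ⟨B, fun h hh => ?_⟩
  obtain ⟨V, hV, y, hy, hy0, hE⟩ := exists_expV h hh
  have : Phi c g h = Phi c g (expV y V) := by
    unfold Phi
    refine Finset.sum_congr rfl fun i _ => Finset.sum_congr rfl fun k _ => ?_
    rw [Matrix.conjTranspose_mul, Matrix.conjTranspose_mul]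
    have : ∀ A B C D : Matrix (Fin n) (Fin n) ℂ, A * B * (C * D) = A * (B * C) * D := by
      intros; simp only [Matrix.mul_assoc]
    rw [this, this, hE]
  rw [this]
  exact hB V hV y hy hy0

end HornAux

namespace HornAux

open Matrix
open scoped ComplexOrder

lemma log_det_le {K : Type} [Fintype K] [DecidableEq K] (A : Matrix K K ℂ) (hA : A.PosDef) :
    Real.log ‖A.det‖ ≤ A.trace.re - Fintype.card K := by
  rw [hA.1.det_eq_prod_eigenvalues, hA.1.trace_eq_sum_eigenvalues, norm_prod, Real.log_prod]
  · rw [Complex.re_sum, Fintype.card_eq_sum_ones]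
    push_cast
    rw [← Finset.sum_sub_distrib]
    refine Finset.sum_le_sum fun j _ => ?_
    have h1 : ‖((hA.1.eigenvalues j : ℝ) : ℂ)‖ = hA.1.eigenvalues j := by
      rw [Complex.norm_real, Real.norm_eq_abs, abs_of_pos (hA.eigenvalues_pos j)]
    refine (le_of_eq (congrArg Real.log h1)).trans ?_
    exact Real.log_le_sub_one_of_pos (hA.eigenvalues_pos j)
  · intro j _
    rw [norm_ne_zero_iff]
    exact Complex.ofReal_ne_zero.2 (hA.eigenvalues_pos j).ne'

lemma trace_cut {n : ℕ} (k : Fin n) (A : Matrix (Fin n) (Fin n) ℂ) :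
    (cut k A).trace = (stepProj k * A).trace := by
  simp only [Matrix.trace, Matrix.diag, stepProj, Matrix.diagonal_mul, cut, Matrix.submatrix_apply,
    ite_mul, one_mul, zero_mul]
  rw [← Finset.sum_filter, Finset.sum_subtype (p := fun j => j ≤ k)]
  simp

lemma posDef_gram {n : ℕ} (M : Matrix (Fin n) (Fin n) ℂ) (hM : IsUnit M.det) : (Mᴴ * M).PosDef :=
  Matrix.PosDef.conjTranspose_mul_self M
    (Matrix.mulVec_injective_iff_isUnit.2 ((Matrix.isUnit_iff_isUnit_det _).2 hM))

lemma posDef_cut {n : ℕ} (k : Fin n) (A : Matrix (Fin n) (Fin n) ℂ) (hA : A.PosDef) : (cut k A).PosDef :=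
  hA.submatrix Subtype.val_injective

lemma isUnit_det_unitary {n : ℕ} {U : Matrix (Fin n) (Fin n) ℂ} (hU : U ∈ Matrix.unitaryGroup (Fin n) ℂ) :
    IsUnit U.det :=
  (Matrix.isUnit_iff_isUnit_det _).1 (IsUnit.of_mul_eq_one _ (Matrix.mem_unitaryGroup_iff.1 hU))

lemma card_le_sub {n : ℕ} (k : Fin n) : (Fintype.card {j : Fin n // j ≤ k} : ℝ) = (k : ℕ) + 1 := by
  rw [Fintype.card_subtype]
  have : (Finset.univ.filter fun a => a ≤ k) = Finset.Iic k := by ext; simp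
  rw [this, Fin.card_Iic]; push_cast; ring

lemma Phi_le {n : ℕ} {ι : Type} [Fintype ι] (c : ι → Fin n → ℝ) (hc : ∀ i k, 0 ≤ c i k)
    (U : ι → Matrix (Fin n) (Fin n) ℂ) (hU : ∀ i, U i ∈ Matrix.unitaryGroup (Fin n) ℂ)
    (X : Matrix (Fin n) (Fin n) ℂ) (hX : IsUnit X.det) :
    Phi c U X ≤ (((∑ i, ∑ k, (c i k : ℂ) • (U i * stepProj k * (U i)ᴴ)) * (Xᴴ * X)).trace).re -
      ∑ i, ∑ k, c i k * ((k : ℕ) + 1 : ℝ) := by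
  have h1 : (((∑ i, ∑ k, (c i k : ℂ) • (U i * stepProj k * (U i)ᴴ)) * (Xᴴ * X)).trace).re =
      ∑ i, ∑ k, c i k * ((cut k ((X * U i)ᴴ * (X * U i))).trace).re := by
    simp only [Finset.sum_mul, Matrix.trace_sum, Complex.re_sum]
    refine Finset.sum_congr rfl fun i _ => Finset.sum_congr rfl fun k _ => ?_
    rw [Matrix.smul_mul, Matrix.trace_smul, smul_eq_mul, Complex.re_ofReal_mul, trace_cut]
    congr 2
    rw [Matrix.mul_assoc, Matrix.mul_assoc, Matrix.trace_mul_comm, Matrix.conjTranspose_mul]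
    simp only [Matrix.mul_assoc]
  rw [h1, ← Finset.sum_sub_distrib]
  unfold Phi
  refine Finset.sum_le_sum fun i _ => ?_
  rw [← Finset.sum_sub_distrib]
  refine Finset.sum_le_sum fun k _ => ?_
  rw [← mul_sub]
  refine mul_le_mul_of_nonneg_left ?_ (hc i k)
  have := log_det_le _ (posDef_cut k _ (posDef_gram (X * U i) (by
    rw [Matrix.det_mul]; exact hX.mul (isUnit_det_unitary (hU i)))))
  rwa [card_le_sub] at this

lemma herm_sum {n : ℕ} {ι : Type} [Fintype ι] (c : ι → Fin n → ℝ)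
    (U : ι → Matrix (Fin n) (Fin n) ℂ) :
    (∑ i, ∑ k, (c i k : ℂ) • (U i * stepProj k * (U i)ᴴ)).IsHermitian := by
  unfold Matrix.IsHermitian
  simp only [Matrix.conjTranspose_sum, Matrix.conjTranspose_smul, Matrix.conjTranspose_mul,
    Matrix.conjTranspose_conjTranspose, stepProj_herm, Matrix.mul_assoc]
  refine Finset.sum_congr rfl fun i _ => Finset.sum_congr rfl fun k _ => ?_
  congr 1
  exact Complex.conj_ofReal _

lemma trace_sum_horn {n : ℕ} {ι : Type} [Fintype ι] (c : ι → Fin n → ℝ)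
    (U : ι → Matrix (Fin n) (Fin n) ℂ) (hU : ∀ i, U i ∈ Matrix.unitaryGroup (Fin n) ℂ) :
    (∑ i, ∑ k, (c i k : ℂ) • (U i * stepProj k * (U i)ᴴ)).trace =
      ((∑ i, ∑ k, c i k * ((k : ℕ) + 1 : ℝ) : ℝ) : ℂ) := by
  simp only [Matrix.trace_sum, Complex.ofReal_sum]
  refine Finset.sum_congr rfl fun i _ => Finset.sum_congr rfl fun k _ => ?_
  have : (U i)ᴴ * U i = 1 := Matrix.mem_unitaryGroup_iff'.1 (hU i)
  rw [Matrix.trace_smul, Matrix.trace_mul_comm, ← Matrix.mul_assoc, this, one_mul, trace_stepProj]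
  push_cast; rfl

lemma neg_step {n : ℕ} {ι : Type} [Fintype ι] (c : ι → Fin n → ℝ) (hc : ∀ i k, 0 ≤ c i k)
    (U : ι → Matrix (Fin n) (Fin n) ℂ) (hU : ∀ i, U i ∈ Matrix.unitaryGroup (Fin n) ℂ)
    (hne : ∑ i, ∑ k, (c i k : ℂ) • (U i * stepProj k * (U i)ᴴ) ≠ (avg c : ℂ) • 1) :
    ∃ X : Matrix (Fin n) (Fin n) ℂ, X.det = 1 ∧ Phi c U X < 0 := by
  rcases Nat.eq_zero_or_pos n with rfl | hn
  · exact absurd (Subsingleton.elim _ _) hne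
  have hnR : (n : ℝ) ≠ 0 := by positivity
  set Q := ∑ i, ∑ k, (c i k : ℂ) • (U i * stepProj k * (U i)ᴴ) with hQ
  have hQh : Q.IsHermitian := herm_sum c U
  obtain ⟨W, hW, hspec⟩ := spectral Q hQh
  set q := hQh.eigenvalues with hq
  let s : Fin n → ℝ := fun j => q j - avg c
  have hWW : Wᴴ * W = 1 := Matrix.mem_unitaryGroup_iff'.1 hW
  have hWW' : W * Wᴴ = 1 := Matrix.mem_unitaryGroup_iff.1 hW
  have htr : ∑ i, ∑ k, c i k * ((k : ℕ) + 1 : ℝ) = ∑ j, q j := by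
    have h1 := trace_sum_horn c U hU
    rw [← hQ, hQh.trace_eq_sum_eigenvalues] at h1
    have h2 : ((∑ j, q j : ℝ) : ℂ) = ((∑ i, ∑ k, c i k * ((k : ℕ) + 1 : ℝ) : ℝ) : ℂ) := by
      rw [Complex.ofReal_sum]; exact h1
    exact (Complex.ofReal_injective h2).symm
  have havg : ∑ j, q j = n * avg c := by
    rw [← htr, avg]; field_simp
  have hs0 : ∑ j, s j = 0 := by
    simp only [s, Finset.sum_sub_distrib, havg]; simp
  let X : ℝ → Matrix (Fin n) (Fin n) ℂ := fun t => W * diagonal (fun j => (Real.exp (-t * s j) : ℂ)) * Wᴴ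
  have hXdet : ∀ t, (X t).det = 1 := by
    intro t
    have : (X t).det = (W * Wᴴ).det * ∏ j, (Real.exp (-t * s j) : ℂ) := by
      simp only [X, Matrix.det_mul, Matrix.det_diagonal]; ring
    rw [this, hWW', Matrix.det_one, one_mul, ← Complex.ofReal_prod, ← Real.exp_sum, ← Finset.mul_sum, hs0]
    simp
  have hXX : ∀ t, (Q * ((X t)ᴴ * X t)).trace.re = ∑ j, q j * Real.exp (-2 * t * s j) := by
    intro t
    have h1 : (X t)ᴴ = X t := by
      simp only [X, Matrix.conjTranspose_mul, Matrix.conjTranspose_conjTranspose, Matrix.diagonal_conjTranspose,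
        Matrix.mul_assoc]
      congr 3
      ext j
      exact Complex.conj_ofReal _
    have h2 : ∀ a b : Fin n → ℂ, (W * diagonal a * Wᴴ) * (W * diagonal b * Wᴴ) = W * diagonal (fun j => a j * b j) * Wᴴ := by
      intro a b
      have : (W * diagonal a * Wᴴ) * (W * diagonal b * Wᴴ) = W * diagonal a * (Wᴴ * W) * diagonal b * Wᴴ := by
        simp only [Matrix.mul_assoc]
      rw [this, hWW, mul_one, Matrix.mul_assoc W, Matrix.diagonal_mul_diagonal]
    rw [h1, hspec]
    simp only [X]
    rw [h2, h2, Matrix.trace_mul_comm, ← Matrix.mul_assoc, hWW, one_mul, Matrix.trace_diagonal, Complex.re_sum]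
    refine Finset.sum_congr rfl fun j _ => ?_
    rw [← Complex.ofReal_mul, ← Complex.ofReal_mul, Complex.ofReal_re, ← Real.exp_add]
    congr 2
    ring
  by_contra hcon
  push Not at hcon
  let f : ℝ → ℝ := fun t => ∑ j, q j * Real.exp (-2 * t * s j)
  have hf0 : f 0 = ∑ j, q j := by simp [f]
  have hmin : ∀ t, f 0 ≤ f t := by
    intro t
    have h1 := Phi_le c hc U hU (X t) (by rw [hXdet]; exact isUnit_one)
    have h2 := hcon (X t) (hXdet t)
    rw [← hQ, hXX, htr] at h1
    rw [hf0]
    simp only [f]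
    linarith
  have hder : HasDerivAt f (∑ j, q j * (-2 * s j)) 0 := by
    apply HasDerivAt.fun_sum
    intro j _
    have h1 : HasDerivAt (fun t : ℝ => -2 * t * s j) (-2 * s j) 0 := by
      have := ((hasDerivAt_id (0:ℝ)).const_mul (-2)).mul_const (s j)
      simpa using this
    have h2 := (h1.exp).const_mul (q j)
    simpa using h2
  have hz := IsLocalMin.hasDerivAt_eq_zero (Filter.Eventually.of_forall hmin) hder
  have hsq : ∑ j, s j ^ 2 = 0 := by
    have : ∑ j, q j * (-2 * s j) = -2 * ∑ j, s j ^ 2 - 2 * avg c * ∑ j, s j := by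
      rw [Finset.mul_sum, Finset.mul_sum, ← Finset.sum_sub_distrib]
      refine Finset.sum_congr rfl fun j _ => ?_
      simp only [s]; ring
    rw [hs0] at this
    linarith
  have hs : ∀ j, s j = 0 := by
    intro j
    have := (Finset.sum_eq_zero_iff_of_nonneg (fun j _ => sq_nonneg (s j))).1 hsq j (Finset.mem_univ _)
    simpa using this
  apply hne
  have hqa : (fun j => (q j : ℂ)) = fun _ => (avg c : ℂ) := by
    ext j
    have := hs j
    simp only [s] at this
    rw [sub_eq_zero.1 this]
  rw [hspec, hqa, ← Matrix.smul_one_eq_diagonal, Matrix.mul_smul, Matrix.smul_mul, mul_one, hWW']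

lemma cut_mul_upper {n : ℕ} (k : Fin n) (A T : Matrix (Fin n) (Fin n) ℂ) (hT : ∀ i j, j < i → T i j = 0) :
    cut k (A * T) = cut k A * cut k T := by
  ext a b
  simp only [cut, Matrix.submatrix_apply, Matrix.mul_apply]
  have h1 : ∑ j : {j : Fin n // j ≤ k}, A a j * T j b =
      ∑ j ∈ Finset.univ.filter (fun j => j ≤ k), A a j * T j b :=
    (Finset.sum_subtype (p := fun j => j ≤ k) _ (by simp) (fun j => A a j * T j b)).symm
  refine Eq.trans ?_ h1.symm
  symm
  apply Finset.sum_subset (Finset.subset_univ _)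
  intro j _ hj
  have hj' : k < j := by simpa using hj
  rw [hT j b (lt_of_le_of_lt b.2 hj'), mul_zero]

lemma cut_conjTranspose {n : ℕ} (k : Fin n) (A : Matrix (Fin n) (Fin n) ℂ) : cut k Aᴴ = (cut k A)ᴴ := rfl

lemma cut_gram_upper {n : ℕ} (k : Fin n) (A T : Matrix (Fin n) (Fin n) ℂ) (hT : ∀ i j, j < i → T i j = 0) :
    cut k (Tᴴ * A * T) = (cut k T)ᴴ * cut k A * cut k T := by
  rw [cut_mul_upper k _ T hT]
  congr 1
  have := cut_mul_upper k Aᴴ T hT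
  have h2 := congrArg Matrix.conjTranspose this
  rw [← cut_conjTranspose, Matrix.conjTranspose_mul, Matrix.conjTranspose_mul, Matrix.conjTranspose_conjTranspose,
    cut_conjTranspose, Matrix.conjTranspose_conjTranspose] at h2
  exact h2

lemma Phi_mul {n : ℕ} {ι : Type} [Fintype ι] (c : ι → Fin n → ℝ)
    (g U T : ι → Matrix (Fin n) (Fin n) ℂ) (hU : ∀ i, U i ∈ Matrix.unitaryGroup (Fin n) ℂ)
    (hT : ∀ l i j, j < i → T l i j = 0)
    (h X : Matrix (Fin n) (Fin n) ℂ) (hX : IsUnit X.det) (hg : ∀ i, IsUnit (h * g i).det)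
    (hqr : ∀ i, h * g i = U i * T i) :
    Phi c g (X * h) = Phi c g h + Phi c U X := by
  unfold Phi
  rw [← Finset.sum_add_distrib]
  refine Finset.sum_congr rfl fun i _ => ?_
  rw [← Finset.sum_add_distrib]
  refine Finset.sum_congr rfl fun k _ => ?_
  rw [← mul_add]
  congr 1
  have hUU : (U i)ᴴ * U i = 1 := Matrix.mem_unitaryGroup_iff'.1 (hU i)
  have e1 : (X * h * g i)ᴴ * (X * h * g i) = (T i)ᴴ * ((X * U i)ᴴ * (X * U i)) * T i := by
    rw [Matrix.mul_assoc X h, hqr]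
    simp only [Matrix.conjTranspose_mul, Matrix.mul_assoc]
  have e2 : (h * g i)ᴴ * (h * g i) = (T i)ᴴ * T i := by
    rw [hqr, Matrix.conjTranspose_mul]
    have : (T i)ᴴ * (U i)ᴴ * (U i * T i) = (T i)ᴴ * ((U i)ᴴ * U i) * T i := by simp only [Matrix.mul_assoc]
    rw [this, hUU, mul_one]
  have e3 : cut k ((T i)ᴴ * T i) = (cut k (T i))ᴴ * cut k (T i) := by
    rw [cut_mul_upper k _ _ (hT i)]; rfl
  have n1 := (posDef_cut k _ (posDef_gram (h * g i) (hg i))).det_pos.ne'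
  have n2 := (posDef_cut k _ (posDef_gram (X * U i) (by
    rw [Matrix.det_mul]; exact hX.mul (isUnit_det_unitary (hU i))))).det_pos.ne'
  rw [e1, cut_gram_upper k _ _ (hT i), ← Real.log_mul (norm_ne_zero_iff.2 n1) (norm_ne_zero_iff.2 n2),
    e2, e3]
  congr 1
  simp only [Matrix.det_mul, norm_mul]
  ring

lemma uniform_step {n : ℕ} {ι : Type} [Fintype ι] (c : ι → Fin n → ℝ) (hc : ∀ i k, 0 ≤ c i k)
    (hno : ¬ HornC c) : ∃ δ > 0, ∀ U ∈ Set.pi Set.univ (fun _ : ι => {V | V ∈ Matrix.unitaryGroup (Fin n) ℂ}),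
      ∃ X : Matrix (Fin n) (Fin n) ℂ, X.det = 1 ∧ Phi c U X ≤ -δ := by
  refine (isCompact_univ_pi fun _ : ι => isCompact_unitary n).induction_on
    (p := fun S => ∃ δ > 0, ∀ U ∈ S, ∃ X : Matrix (Fin n) (Fin n) ℂ, X.det = 1 ∧ Phi c U X ≤ -δ) ?_ ?_ ?_ ?_
  · exact ⟨1, one_pos, by simp⟩
  · rintro S S' hS ⟨δ, h0, h⟩
    exact ⟨δ, h0, fun U hU => h U (hS hU)⟩
  · rintro S S' ⟨δ, h0, h⟩ ⟨δ', h0', h'⟩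
    refine ⟨min δ δ', lt_min h0 h0', ?_⟩
    rintro U (hU | hU)
    · obtain ⟨X, h1, h2⟩ := h U hU
      exact ⟨X, h1, h2.trans (neg_le_neg (min_le_left _ _))⟩
    · obtain ⟨X, h1, h2⟩ := h' U hU
      exact ⟨X, h1, h2.trans (neg_le_neg (min_le_right _ _))⟩
  · intro U0 hU0
    have hU0' : ∀ i, U0 i ∈ Matrix.unitaryGroup (Fin n) ℂ := fun i => hU0 i (Set.mem_univ _)
    obtain ⟨X, hX, hneg⟩ := neg_step c hc U0 hU0' (fun h => hno ⟨U0, hU0', h⟩)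
    have hcont : ContinuousAt (fun U => Phi c U X) U0 := by
      unfold Phi
      refine tendsto_finsetSum _ fun i _ => tendsto_finsetSum _ fun k _ => ?_
      refine Filter.Tendsto.const_mul _ ?_
      refine Filter.Tendsto.log ?_ ?_
      · refine Continuous.tendsto (f := fun U : ι → Matrix (Fin n) (Fin n) ℂ => ‖(cut k ((X * U i)ᴴ * (X * U i))).det‖) ?_ U0
        refine Continuous.norm (Continuous.matrix_det ?_)
        exact Continuous.matrix_submatrix (by fun_prop) _ _
      · have := (posDef_cut k _ (posDef_gram (X * U0 i) (by
          rw [Matrix.det_mul, hX, one_mul]; exact (isUnit_det_unitary (hU0' i))))).det_pos.ne'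
        exact norm_ne_zero_iff.2 this
    have hev := hcont.eventually (gt_mem_nhds (show Phi c U0 X < Phi c U0 X / 2 by linarith))
    refine ⟨_, mem_nhdsWithin_of_mem_nhds hev, -(Phi c U0 X / 2), by linarith, ?_⟩
    intro U hU
    refine ⟨X, hX, ?_⟩
    rw [neg_neg]
    exact le_of_lt hU

lemma horn_of_bdd {n : ℕ} {ι : Type} [Fintype ι] (c : ι → Fin n → ℝ) (hc : ∀ i k, 0 ≤ c i k)
    (g : ι → Matrix (Fin n) (Fin n) ℂ) (hg : ∀ i, IsUnit (g i).det) (B : ℝ)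
    (hB : ∀ h : Matrix (Fin n) (Fin n) ℂ, ‖h.det‖ = 1 → -B ≤ Phi c g h) : HornC c := by
  by_contra hno
  obtain ⟨δ, hδ, hstep⟩ := uniform_step c hc hno
  have hiter : ∀ N : ℕ, ∃ h : Matrix (Fin n) (Fin n) ℂ, h.det = 1 ∧ Phi c g h ≤ Phi c g 1 - N * δ := by
    intro N
    induction N with
    | zero => exact ⟨1, by simp, by simp⟩
    | succ N ih =>
      obtain ⟨h, h1, h2⟩ := ih
      choose U hU T hT hqr using fun i => exists_qr (h * g i)
      obtain ⟨X, hX, hX2⟩ := hstep U (fun i _ => hU i)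
      refine ⟨X * h, by rw [Matrix.det_mul, hX, h1, one_mul], ?_⟩
      rw [Phi_mul c g U T hU hT h X (by rw [hX]; exact isUnit_one)
        (fun i => by rw [Matrix.det_mul, h1, one_mul]; exact hg i) hqr]
      push_cast
      linarith
  obtain ⟨N, hN⟩ := exists_nat_gt ((Phi c g 1 + B) / δ)
  rw [div_lt_iff₀ hδ] at hN
  obtain ⟨h, h1, h2⟩ := hiter N
  have := hB h (by rw [h1]; simp)
  linarith

lemma HornC.add {n : ℕ} {ι : Type} [Fintype ι] {c c' : ι → Fin n → ℝ} (hc : ∀ i k, 0 ≤ c i k)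
    (hc' : ∀ i k, 0 ≤ c' i k) (h : HornC c) (h' : HornC c') : HornC (c + c') := by
  obtain ⟨U, hU, hE⟩ := h
  obtain ⟨U', hU', hE'⟩ := h'
  have h1 := SS_of_horn c hc U hU hE
  have h2 := SS_of_horn c' hc' U' hU' hE'
  obtain ⟨g, hg, hg1, hg2⟩ := exists_generic_flags U U' hU
  have hs := (hg1 c hc h1).add (hg2 c' hc' h2)
  have hcc : ∀ i k, 0 ≤ (c + c') i k := fun i k => add_nonneg (hc i k) (hc' i k)
  obtain ⟨B, hB⟩ := bdd_Phi (c + c') hcc g hg hs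
  exact horn_of_bdd (c + c') hcc g hg B hB

end HornAux

namespace HornAux

open Matrix
open scoped ComplexOrder

/-- diagonal matrix with real entries -/
noncomputable def dg {n : ℕ} (a : Fin n → ℝ) : Matrix (Fin n) (Fin n) ℂ := diagonal fun j => (a j : ℂ)

/-- Horn problem: orbits through `α i` contain matrices summing to zero. -/
def HH {n : ℕ} {ι : Type} [Fintype ι] (α : ι → Fin n → ℝ) : Prop :=
  ∃ U : ι → Matrix (Fin n) (Fin n) ℂ, (∀ i, U i ∈ Matrix.unitaryGroup (Fin n) ℂ) ∧
    ∑ i, U i * dg (α i) * (U i)ᴴ = 0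

lemma dg_decomp {n : ℕ} (a : Fin n → ℝ) (s : ℝ) (c : Fin n → ℝ)
    (h : ∀ j, a j = s + ∑ d, c d * (if j ≤ d then 1 else 0)) :
    dg a = (s : ℂ) • 1 + ∑ d, (c d : ℂ) • stepProj d := by
  ext i j
  rw [Matrix.add_apply, Matrix.sum_apply, dg]
  by_cases hij : i = j
  · subst hij
    simp [h, stepProj]
    refine Finset.sum_congr rfl fun d _ => ?_
    split_ifs <;> simp
  · simp [stepProj, hij]

lemma conj_decomp {n : ℕ} (a : Fin n → ℝ) (s : ℝ) (c : Fin n → ℝ)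
    (h : ∀ j, a j = s + ∑ d, c d * (if j ≤ d then 1 else 0)) (U : Matrix (Fin n) (Fin n) ℂ)
    (hU : U ∈ Matrix.unitaryGroup (Fin n) ℂ) :
    U * dg a * Uᴴ = (s : ℂ) • 1 + ∑ d, (c d : ℂ) • (U * stepProj d * Uᴴ) := by
  have hUU : U * Uᴴ = 1 := Matrix.mem_unitaryGroup_iff.1 hU
  rw [dg_decomp a s c h, mul_add, add_mul, Matrix.mul_smul, Matrix.smul_mul, mul_one, hUU,
    Finset.mul_sum, Finset.sum_mul]
  congr 1
  refine Finset.sum_congr rfl fun d _ => ?_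
  rw [Matrix.mul_smul, Matrix.smul_mul]

lemma HH_iff {n : ℕ} (hn : 0 < n) {ι : Type} [Fintype ι] (α : ι → Fin n → ℝ) (s : ι → ℝ) (c : ι → Fin n → ℝ)
    (h : ∀ i j, α i j = s i + ∑ d, c i d * (if j ≤ d then 1 else 0)) :
    HH α ↔ (HornC c ∧ ∑ i, s i = - avg c) := by
  have key : ∀ U : ι → Matrix (Fin n) (Fin n) ℂ, (∀ i, U i ∈ Matrix.unitaryGroup (Fin n) ℂ) →
      ∑ i, U i * dg (α i) * (U i)ᴴ = ((∑ i, s i : ℝ) : ℂ) • 1 +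
        ∑ i, ∑ k, (c i k : ℂ) • (U i * stepProj k * (U i)ᴴ) := by
    intro U hU
    rw [Complex.ofReal_sum, Finset.sum_smul, ← Finset.sum_add_distrib]
    exact Finset.sum_congr rfl fun i _ => conj_decomp _ _ _ (h i) _ (hU i)
  have hnR : (n : ℝ) ≠ 0 := by positivity
  constructor
  · rintro ⟨U, hU, hE⟩
    rw [key U hU] at hE
    have htr := congrArg Matrix.trace hE
    rw [Matrix.trace_add, trace_sum_horn c U hU, Matrix.trace_smul, Matrix.trace_one, Matrix.trace_zero,
      Fintype.card_fin, smul_eq_mul] at htr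
    have h3 : ∑ i, ∑ k, c i k * ((k : ℕ) + 1 : ℝ) = n * avg c := by
      rw [avg]; field_simp
    rw [h3] at htr
    have h4 : (∑ i, s i) * n + n * avg c = 0 := by exact_mod_cast htr
    have h5 : ∑ i, s i = - avg c := by
      have : (n : ℝ) * (∑ i, s i + avg c) = 0 := by linarith
      have := (mul_eq_zero.1 this).resolve_left hnR
      linarith
    refine ⟨⟨U, hU, ?_⟩, h5⟩
    rw [h5] at hE
    rw [add_comm] at hE
    rw [eq_neg_of_add_eq_zero_left hE]
    push_cast
    rw [neg_smul, neg_neg]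
  · rintro ⟨⟨U, hU, hE⟩, h5⟩
    refine ⟨U, hU, ?_⟩
    rw [key U hU, hE, h5]
    push_cast
    rw [neg_smul, neg_add_cancel]

lemma HH.add {n : ℕ} {ι : Type} [Fintype ι] {α β : ι → Fin n → ℝ} (hα : ∀ i, Antitone (α i))
    (hβ : ∀ i, Antitone (β i)) (h : HH α) (h' : HH β) : HH (α + β) := by
  rcases Nat.eq_zero_or_pos n with rfl | hn
  · exact ⟨fun _ => 1, fun _ => one_mem _, Subsingleton.elim _ _⟩
  choose s c hc hs using fun i => antitone_decomp (α i) (hα i)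
  choose s' c' hc' hs' using fun i => antitone_decomp (β i) (hβ i)
  rw [HH_iff hn α s c hs] at h
  rw [HH_iff hn β s' c' hs'] at h'
  rw [HH_iff hn (α + β) (s + s') (c + c')]
  · refine ⟨HornC.add hc hc' h.1 h'.1, ?_⟩
    simp only [Pi.add_apply, Finset.sum_add_distrib, h.2, h'.2, avg_add]
    ring
  · intro i j
    simp only [Pi.add_apply, hs, hs', add_mul, Finset.sum_add_distrib]
    ring

lemma HH.sum {n : ℕ} {ι : Type} [Fintype ι] {κ : Type} (T : Finset κ) (α : κ → ι → Fin n → ℝ)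
    (hα : ∀ p i, Antitone (α p i)) (h : ∀ p, HH (α p)) : HH (∑ p ∈ T, α p) := by
  refine (Finset.sum_induction α (fun β => (∀ i, Antitone (β i)) ∧ HH β) ?_ ?_ ?_).2
  · rintro a b ⟨h1, h2⟩ ⟨h3, h4⟩
    exact ⟨fun i => (h1 i).add (h3 i), h2.add h1 h3 h4⟩
  · refine ⟨fun i a b _ => le_rfl, fun _ => 1, fun _ => one_mem _, ?_⟩
    simp [dg]
  · exact fun p _ => ⟨hα p, h p⟩

lemma exists_perm_of_map_eq {n : ℕ} (f g : Fin n → ℝ)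
    (h : Multiset.map f Finset.univ.val = Multiset.map g Finset.univ.val) :
    ∃ σ : Equiv.Perm (Fin n), ∀ i, f (σ i) = g i := by
  classical
  have hc : ∀ c, Nonempty ({a // g a = c} ≃ {a // f a = c}) := by
    intro c
    refine ⟨Fintype.equivOfCardEq ?_⟩
    have := congrArg (Multiset.count c) h
    rw [Multiset.count_map, Multiset.count_map] at this
    rw [Fintype.card_subtype, Fintype.card_subtype]
    simp only [eq_comm (a := c)] at this
    exact this.symm
  let e := fun c => (hc c).some
  refine ⟨Equiv.ofFiberEquiv e, fun i => ?_⟩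
  exact Equiv.ofFiberEquiv_map e i

lemma dg_herm {n : ℕ} (a : Fin n → ℝ) : (dg a)ᴴ = dg a := by
  rw [dg, Matrix.diagonal_conjTranspose]
  congr 1
  ext j
  exact Complex.conj_ofReal _

lemma mem_orbit_iff {n : ℕ} (lam : Fin n → ℝ) (h0 : ∑ i, lam i = 0) (A : Matrix (Fin n) (Fin n) ℂ) :
    A ∈ coadjointOrbit lam ↔ ∃ U ∈ Matrix.unitaryGroup (Fin n) ℂ, A = U * dg lam * Uᴴ := by
  constructor
  · rintro ⟨_, hA, σ, hσ⟩
    obtain ⟨U, hU, hE⟩ := spectral A hA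
    refine ⟨U.submatrix id σ, unitary_submatrix U hU σ, ?_⟩
    have : dg lam = diagonal ((fun j => (hA.eigenvalues j : ℂ)) ∘ σ) := by
      rw [dg]; congr 1; ext j; simp [hσ]
    rw [this, diag_perm]
    exact hE
  · rintro ⟨U, hU, rfl⟩
    have hUU : Uᴴ * U = 1 := Matrix.mem_unitaryGroup_iff'.1 hU
    have hA : (U * dg lam * Uᴴ).IsHermitian := by
      unfold Matrix.IsHermitian
      simp only [Matrix.conjTranspose_mul, Matrix.conjTranspose_conjTranspose, dg_herm, Matrix.mul_assoc]
    refine ⟨?_, hA, ?_⟩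
    · rw [Matrix.trace_mul_comm, ← Matrix.mul_assoc, hUU, one_mul, dg, Matrix.trace_diagonal]
      exact_mod_cast h0
    · apply exists_perm_of_map_eq
      have h1 := hA.roots_charpoly_eq_eigenvalues
      have h2 : (U * dg lam * Uᴴ).charpoly = ∏ i, (Polynomial.X - Polynomial.C (lam i : ℂ)) := by
        rw [Matrix.charpoly_mul_comm, ← Matrix.mul_assoc, hUU, one_mul, dg, Matrix.charpoly_diagonal]
      have h3 : (∏ i, (Polynomial.X - Polynomial.C (lam i : ℂ))).roots =
          Multiset.map (fun i => (lam i : ℂ)) Finset.univ.val := by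
        rw [Polynomial.roots_prod]
        · simp
        · simp [Finset.prod_ne_zero_iff, Polynomial.X_sub_C_ne_zero]
      rw [h2, h3] at h1
      have h4 := congrArg (Multiset.map Complex.re) h1
      rw [Multiset.map_map, Multiset.map_map] at h4
      refine Eq.trans ?_ (h4.symm.trans ?_)
      · exact Multiset.map_congr rfl fun i _ => rfl
      · exact Multiset.map_congr rfl fun i _ => rfl

end HornAux

namespace HornAux

open Matrix
open scoped ComplexOrder

lemma exists_weights {E : Type} [AddCommGroup E] [Module ℝ E] {r : ℕ} (f : Fin r → E) (y : E)
    (hy : y ∈ convexHull ℝ (Set.range f)) :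
    ∃ t : Fin r → ℝ, (∀ i, 0 ≤ t i) ∧ ∑ i, t i = 1 ∧ ∑ i, t i • f i = y := by
  have hsub : convexHull ℝ (Set.range f) ⊆
      {y | ∃ t : Fin r → ℝ, (∀ i, 0 ≤ t i) ∧ ∑ i, t i = 1 ∧ ∑ i, t i • f i = y} := by
    refine convexHull_min ?_ ?_
    · rintro _ ⟨i, rfl⟩
      refine ⟨Pi.single i 1, fun j => ?_, by simp, ?_⟩
      · by_cases h : j = i
        · subst h; simp
        · simp [h]
      · rw [Finset.sum_eq_single i]
        · simp
        · intro j _ h; simp [h]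
        · simp
    · rintro x ⟨t, h1, h2, h3⟩ x' ⟨t', h1', h2', h3'⟩ a b ha hb hab
      refine ⟨fun i => a * t i + b * t' i, fun i => ?_, ?_, ?_⟩
      · have := h1 i; have := h1' i; positivity
      · rw [Finset.sum_add_distrib, ← Finset.mul_sum, ← Finset.mul_sum, h2, h2']; linarith
      · simp only [add_smul, Finset.sum_add_distrib, mul_smul, ← Finset.smul_sum, h3, h3']
  exact hsub hy

lemma mem_pch {E : Type} [AddCommGroup E] [Module ℝ E] {r : ℕ} {X : Set E} {y : E} :
    y ∈ partialConvexHull r X ↔ ∃ f : Fin r → E, (∀ i, f i ∈ X) ∧ 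
      ∃ t : Fin r → ℝ, (∀ i, 0 ≤ t i) ∧ ∑ i, t i = 1 ∧ ∑ i, t i • f i = y := by
  constructor
  · rintro ⟨f, hf, hy⟩
    exact ⟨f, hf, exists_weights f y hy⟩
  · rintro ⟨f, hf, t, h1, h2, h3⟩
    exact ⟨f, hf, mem_convexHull_of_exists_fintype t f h1 h2 (fun i => ⟨i, rfl⟩) h3⟩

lemma hull_subset_pch {E : Type} [AddCommGroup E] [Module ℝ E] {r : ℕ} (hr : 1 ≤ r) {X : Set E}
    (hc : Convex ℝ (partialConvexHull r X)) : convexHull ℝ X ⊆ partialConvexHull r X := by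
  refine convexHull_min (fun x hx => ⟨fun _ => x, fun _ => hx, ?_⟩) hc
  exact subset_convexHull ℝ _ ⟨⟨0, hr⟩, rfl⟩

lemma pch_subset_hull {E : Type} [AddCommGroup E] [Module ℝ E] {r : ℕ} {X : Set E} :
    partialConvexHull r X ⊆ convexHull ℝ X := by
  rintro y ⟨f, hf, hy⟩
  exact convexHull_mono (by rintro _ ⟨i, rfl⟩; exact hf i) hy

/-- the vector `-ν` reversed, scaled by `r` -/
def fam {n r : ℕ} (a : Fin n → ℝ) (lam : Fin r → Fin n → ℝ) : Option (Fin r) → Fin n → ℝ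
  | none => fun j => - a (Fin.rev j)
  | some i => lam i

lemma fam_antitone {n r : ℕ} {a : Fin n → ℝ} {lam : Fin r → Fin n → ℝ} (ha : Antitone a)
    (hl : ∀ i, Antitone (lam i)) : ∀ i, Antitone (fam a lam i) := by
  rintro (_ | i)
  · intro j j' h
    exact neg_le_neg (ha (Fin.rev_le_rev.2 h))
  · exact hl i

lemma revU {n : ℕ} (V : Matrix (Fin n) (Fin n) ℂ) (a : Fin n → ℝ) :
    (V.submatrix id Fin.revPerm) * dg (fun j => - a (Fin.rev j)) * (V.submatrix id Fin.revPerm)ᴴ =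
      - (V * dg a * Vᴴ) := by
  have h1 : dg (fun j => - a (Fin.rev j)) = diagonal ((fun j => -(a j : ℂ)) ∘ (Fin.revPerm : Equiv.Perm (Fin n))) := by
    rw [dg]; congr 1; ext j; simp
  have h2 : diagonal (fun j => -(a j : ℂ)) = - dg a := by
    rw [dg, Matrix.diagonal_neg]
  rw [h1, diag_perm, h2]
  simp

lemma HH_fam_of {n r : ℕ} (a : Fin n → ℝ) (lam : Fin r → Fin n → ℝ) (U : Fin r → Matrix (Fin n) (Fin n) ℂ)
    (hU : ∀ i, U i ∈ Matrix.unitaryGroup (Fin n) ℂ)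
    (h : ∑ i, U i * dg (lam i) * (U i)ᴴ = dg a) : HH (fam a lam) := by
  refine ⟨fun o => o.elim ((1 : Matrix (Fin n) (Fin n) ℂ).submatrix id Fin.revPerm) U, ?_, ?_⟩
  · rintro (_ | i)
    · exact unitary_submatrix _ (one_mem _) _
    · exact hU i
  · rw [Fintype.sum_option]
    simp only [Option.elim, fam]
    rw [revU, h]
    simp

lemma of_HH_fam {n r : ℕ} (a : Fin n → ℝ) (lam : Fin r → Fin n → ℝ) (h : HH (fam a lam)) :
    ∃ U : Fin r → Matrix (Fin n) (Fin n) ℂ, 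
    (∀ i, U i ∈ Matrix.unitaryGroup (Fin n) ℂ) ∧ ∑ i, U i * dg (lam i) * (U i)ᴴ = dg a := by
  obtain ⟨U, hU, hE⟩ := h
  rw [Fintype.sum_option] at hE
  simp only [fam] at hE
  let V := (U none).submatrix id (Fin.revPerm : Equiv.Perm (Fin n))
  have hV : V ∈ Matrix.unitaryGroup (Fin n) ℂ := unitary_submatrix _ (hU none) _
  have hVV : Vᴴ * V = 1 := Matrix.mem_unitaryGroup_iff'.1 hV
  have hVU : V.submatrix id (Fin.revPerm : Equiv.Perm (Fin n)) = U none := by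
    ext i j; simp [V]
  have h1 := revU V a
  rw [hVU] at h1
  rw [h1, neg_add_eq_zero] at hE
  refine ⟨fun i => Vᴴ * U (some i), fun i => ?_, ?_⟩
  · exact mul_mem (Unitary.star_mem hV) (hU _)
  · have h2 : ∀ i, Vᴴ * U (some i) * dg (lam i) * (Vᴴ * U (some i))ᴴ =
        Vᴴ * (U (some i) * dg (lam i) * (U (some i))ᴴ) * V := by
      intro i
      simp only [Matrix.conjTranspose_mul, Matrix.conjTranspose_conjTranspose, Matrix.mul_assoc]
    simp only [h2]
    rw [← Finset.sum_mul, ← Finset.mul_sum, ← hE]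
    have : Vᴴ * (V * dg a * Vᴴ) * V = (Vᴴ * V) * dg a * (Vᴴ * V) := by simp only [Matrix.mul_assoc]
    rw [this, hVV]; simp

lemma smul_dg {n : ℕ} (t : ℝ) (a : Fin n → ℝ) (U : Matrix (Fin n) (Fin n) ℂ) :
    U * dg (t • a) * Uᴴ = t • (U * dg a * Uᴴ) := by
  have : dg (t • a) = t • dg a := by
    ext i j
    by_cases h : i = j
    · subst h; simp [dg]
    · simp [dg, h]
  rw [this, Matrix.mul_smul, Matrix.smul_mul]

lemma HH_of_mem {n r : ℕ} (hr : 1 ≤ r) (lam : Fin n → ℝ) (hl : Antitone lam) (hl0 : ∑ i, lam i = 0)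
    (hc : Convex ℝ (partialConvexHull r (coadjointOrbit lam)))
    (ν : Fin n → ℝ) (hν : Antitone ν) (hm : dg ν ∈ convexHull ℝ (coadjointOrbit lam)) :
    HH (fam (r • ν) (fun _ : Fin r => lam)) := by
  obtain ⟨f, hf, t, ht0, ht1, hsum⟩ := mem_pch.1 (hull_subset_pch hr hc hm)
  choose U hU hfU using fun i => (mem_orbit_iff lam hl0 (f i)).1 (hf i)
  have : NeZero r := ⟨by omega⟩
  have key : ∀ p : Fin r, HH (fam ν (fun i => t (i + p) • lam)) := by
    intro p
    refine HH_fam_of _ _ (fun i => U (i + p)) (fun i => hU _) ?_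
    simp only [smul_dg, ← hfU]
    rw [← hsum]
    exact Equiv.sum_comp (Equiv.addRight p) (fun i => t i • f i)
  have hs := HH.sum Finset.univ (fun p => fam ν (fun i => t (i + p) • lam)) (fun p => fam_antitone hν (fun i => by
    intro a b hab
    exact mul_le_mul_of_nonneg_left (hl hab) (ht0 _))) key
  convert hs using 1
  ext o j
  rw [Finset.sum_apply, Finset.sum_apply]
  rcases o with _ | i
  · simp [fam]
  · simp only [fam, Pi.smul_apply, smul_eq_mul]
    rw [← Finset.sum_mul, Equiv.sum_comp (Equiv.addLeft i) t |> fun h => (h : ∑ p, t (i + p) = _), ht1, one_mul]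

lemma fam_add {n r : ℕ} (a b : Fin n → ℝ) (l m : Fin r → Fin n → ℝ) :
    fam a l + fam b m = fam (a + b) (l + m) := by
  ext o j
  rcases o with _ | i
  · simp [fam]; ring
  · simp [fam]

lemma mem_of_HH {n r : ℕ} (hr : 1 ≤ r) (lam : Fin n → ℝ) (hl0 : ∑ i, lam i = 0)
    (κ : Fin n → ℝ) (h : HH (fam (r • κ) (fun _ : Fin r => lam))) (W : Matrix (Fin n) (Fin n) ℂ)
    (hW : W ∈ Matrix.unitaryGroup (Fin n) ℂ) :
    W * dg κ * Wᴴ ∈ partialConvexHull r (coadjointOrbit lam) := by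
  obtain ⟨U, hU, hE⟩ := of_HH_fam _ _ h
  have hrR : (r : ℝ) ≠ 0 := by positivity
  rw [mem_pch]
  refine ⟨fun i => W * U i * dg lam * (W * U i)ᴴ, fun i => ?_, fun _ => (r : ℝ)⁻¹, fun _ => by positivity, ?_, ?_⟩
  · rw [mem_orbit_iff lam hl0]
    exact ⟨_, mul_mem hW (hU i), rfl⟩
  · simp [hrR]
  · have h2 : ∀ i, W * U i * dg lam * (W * U i)ᴴ = W * (U i * dg lam * (U i)ᴴ) * Wᴴ := by
      intro i
      simp only [Matrix.conjTranspose_mul, Matrix.mul_assoc]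
    simp only [h2]
    rw [← Finset.smul_sum, ← Finset.sum_mul, ← Finset.mul_sum, hE]
    have : (r • κ) = (r : ℝ) • κ := by ext; simp
    rw [this, smul_dg, smul_smul, inv_mul_cancel₀ hrR, one_smul]

/-- partial sums -/
def PS {n : ℕ} (v : Fin n → ℝ) (k : Fin n) : ℝ := ∑ j, if j ≤ k then v j else 0

lemma kyfan {n : ℕ} (ξ : Fin n → ℝ) (hξ : Antitone ξ) (U : Matrix (Fin n) (Fin n) ℂ)
    (hU : U ∈ Matrix.unitaryGroup (Fin n) ℂ) (k : Fin n) :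
    (stepProj k * (U * dg ξ * Uᴴ)).trace.re ≤ PS ξ k := by
  have hr : ∀ i, ∑ j, Complex.normSq (U i j) = 1 := by
    intro i
    have h1 : (U * Uᴴ) i i = 1 := by
      rw [show U * Uᴴ = 1 from Matrix.mem_unitaryGroup_iff.1 hU]; simp
    rw [Matrix.mul_apply] at h1
    have h2 := congrArg Complex.re h1
    rw [Complex.re_sum] at h2
    rw [← Complex.one_re, ← h2]
    refine Finset.sum_congr rfl fun j _ => ?_
    simp [Complex.normSq_apply]
  have hcl : ∀ j, ∑ i, Complex.normSq (U i j) = 1 := by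
    intro i
    have h1 : (Uᴴ * U) i i = 1 := by
      rw [show Uᴴ * U = 1 from Matrix.mem_unitaryGroup_iff'.1 hU]; simp
    rw [Matrix.mul_apply] at h1
    have h2 := congrArg Complex.re h1
    rw [Complex.re_sum] at h2
    rw [← Complex.one_re, ← h2]
    refine Finset.sum_congr rfl fun j _ => ?_
    simp [Complex.normSq_apply]
  let w : Fin n → ℝ := fun j => ∑ i, if i ≤ k then Complex.normSq (U i j) else 0
  have htr : (stepProj k * (U * dg ξ * Uᴴ)).trace.re = ∑ j, w j * ξ j := by
    simp only [Matrix.trace, Matrix.diag, stepProj, Matrix.diagonal_mul]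
    rw [Complex.re_sum]
    have : ∀ i, ((if i ≤ k then (1:ℂ) else 0) * (U * dg ξ * Uᴴ) i i).re =
        ∑ j, (if i ≤ k then Complex.normSq (U i j) else 0) * ξ j := by
      intro i
      split_ifs with h
      · rw [one_mul, Matrix.mul_apply, Complex.re_sum]
        refine Finset.sum_congr rfl fun j _ => ?_
        rw [dg, Matrix.mul_diagonal, Matrix.conjTranspose_apply]
        simp [Complex.normSq_apply]; ring
      · simp
    simp only [this]
    rw [Finset.sum_comm]
    simp only [← Finset.sum_mul, w]
  have hw0 : ∀ j, 0 ≤ w j := fun j => Finset.sum_nonneg fun i _ => by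
    split_ifs
    · exact Complex.normSq_nonneg _
    · exact le_rfl
  have hw1 : ∀ j, w j ≤ 1 := fun j => by
    rw [← hcl j]
    refine Finset.sum_le_sum fun i _ => ?_
    split_ifs
    · exact le_rfl
    · exact Complex.normSq_nonneg _
  have hws : ∑ j, w j = ∑ j, if j ≤ k then (1:ℝ) else 0 := by
    simp only [w]
    rw [Finset.sum_comm]
    refine Finset.sum_congr rfl fun i _ => ?_
    split_ifs
    · exact hr i
    · simp
  have hmain : 0 ≤ ∑ j, ((if j ≤ k then (1:ℝ) else 0) - w j) * (ξ j - ξ k) := by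
    refine Finset.sum_nonneg fun j _ => ?_
    split_ifs with h
    · exact mul_nonneg (sub_nonneg.2 (hw1 j)) (sub_nonneg.2 (hξ h))
    · have h1 := hξ (not_le.1 h).le
      nlinarith [hw0 j]
  have hexp : ∑ j, ((if j ≤ k then (1:ℝ) else 0) - w j) * (ξ j - ξ k) =
      PS ξ k - ∑ j, w j * ξ j - ξ k * (∑ j, (if j ≤ k then (1:ℝ) else 0) - ∑ j, w j) := by
    rw [PS, ← Finset.sum_sub_distrib, ← Finset.sum_sub_distrib, Finset.mul_sum, ← Finset.sum_sub_distrib]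
    refine Finset.sum_congr rfl fun j _ => ?_
    split_ifs <;> ring
  rw [hexp, hws] at hmain
  rw [htr]
  linarith

lemma hull_PS {n : ℕ} (ξ : Fin n → ℝ) (hξ : Antitone ξ) (h0 : ∑ i, ξ i = 0) (κ : Fin n → ℝ)
    (h : dg κ ∈ convexHull ℝ (coadjointOrbit ξ)) :
    (∀ k, PS κ k ≤ PS ξ k) ∧ ∑ i, κ i = 0 := by
  constructor
  · intro k
    have hsub : convexHull ℝ (coadjointOrbit ξ) ⊆ {A | (stepProj k * A).trace.re ≤ PS ξ k} := by
      refine convexHull_min ?_ ?_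
      · intro A hA
        obtain ⟨U, hU, rfl⟩ := (mem_orbit_iff ξ h0 A).1 hA
        exact kyfan ξ hξ U hU k
      · intro A hA B hB a b ha hb hab
        simp only [Set.mem_ofPred_eq] at hA hB ⊢
        rw [mul_add, Matrix.mul_smul, Matrix.mul_smul, Matrix.trace_add, Matrix.trace_smul, Matrix.trace_smul,
          Complex.add_re, Complex.smul_re, Complex.smul_re, smul_eq_mul, smul_eq_mul]
        have : PS ξ k = a * PS ξ k + b * PS ξ k := by rw [← add_mul, hab, one_mul]
        rw [this]
        gcongr
    have h1 := hsub h
    simp only [Set.mem_ofPred_eq] at h1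
    refine le_trans (le_of_eq ?_) h1
    simp only [Matrix.trace, Matrix.diag, stepProj, Matrix.diagonal_mul, dg, Matrix.diagonal_apply_eq]
    rw [Complex.re_sum, PS]
    refine Finset.sum_congr rfl fun j _ => ?_
    split_ifs <;> simp
  · have hsub : convexHull ℝ (coadjointOrbit ξ) ⊆ {A | A.trace = 0} := by
      refine convexHull_min (fun A hA => hA.1) ?_
      intro A hA B hB a b ha hb hab
      simp only [Set.mem_ofPred_eq] at hA hB ⊢
      rw [Matrix.trace_add, Matrix.trace_smul, Matrix.trace_smul, hA, hB]; simp
    have h1 := hsub h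
    simp only [Set.mem_ofPred_eq, dg, Matrix.trace_diagonal] at h1
    exact_mod_cast h1

lemma conj_hull {n : ℕ} (ξ : Fin n → ℝ) (h0 : ∑ i, ξ i = 0) (A : Matrix (Fin n) (Fin n) ℂ)
    (h : A ∈ convexHull ℝ (coadjointOrbit ξ)) (W : Matrix (Fin n) (Fin n) ℂ)
    (hW : W ∈ Matrix.unitaryGroup (Fin n) ℂ) : W * A * Wᴴ ∈ convexHull ℝ (coadjointOrbit ξ) := by
  have hsub : convexHull ℝ (coadjointOrbit ξ) ⊆ {A | W * A * Wᴴ ∈ convexHull ℝ (coadjointOrbit ξ)} := by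
    refine convexHull_min ?_ ?_
    · intro A hA
      apply subset_convexHull
      obtain ⟨U, hU, rfl⟩ := (mem_orbit_iff ξ h0 A).1 hA
      rw [mem_orbit_iff ξ h0]
      refine ⟨W * U, mul_mem hW hU, ?_⟩
      simp only [Matrix.conjTranspose_mul, Matrix.mul_assoc]
    · intro A hA B hB a b ha hb hab
      simp only [Set.mem_ofPred_eq] at hA hB ⊢
      rw [mul_add, add_mul, Matrix.mul_smul, Matrix.mul_smul, Matrix.smul_mul, Matrix.smul_mul]
      exact convex_convexHull ℝ _ hA hB ha hb hab
  exact hsub h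

lemma herm_hull {n : ℕ} (ξ : Fin n → ℝ) (A : Matrix (Fin n) (Fin n) ℂ)
    (h : A ∈ convexHull ℝ (coadjointOrbit ξ)) : A.IsHermitian := by
  have hsub : convexHull ℝ (coadjointOrbit ξ) ⊆ {A | A.IsHermitian} := by
    refine convexHull_min ?_ ?_
    · rintro A ⟨_, hA, _⟩
      exact hA
    · intro A hA B hB a b ha hb hab
      simp only [Set.mem_ofPred_eq, Matrix.IsHermitian] at hA hB ⊢
      rw [Matrix.conjTranspose_add, Matrix.conjTranspose_smul, Matrix.conjTranspose_smul, hA, hB]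
      simp
  exact hsub h

lemma birkhoff_hull {n : ℕ} (lam : Fin n → ℝ) (h0 : ∑ i, lam i = 0) (D : Matrix (Fin n) (Fin n) ℝ)
    (hD : D ∈ doublyStochastic ℝ (Fin n)) : dg (D *ᵥ lam) ∈ convexHull ℝ (coadjointOrbit lam) := by
  have hD' : D ∈ (doublyStochastic ℝ (Fin n) : Set (Matrix (Fin n) (Fin n) ℝ)) := hD
  rw [doublyStochastic_eq_convexHull_permMatrix] at hD'
  have hsub : convexHull ℝ {x | ∃ σ : Equiv.Perm (Fin n), σ.permMatrix ℝ = x} ⊆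
      {D : Matrix (Fin n) (Fin n) ℝ | dg (D *ᵥ lam) ∈ convexHull ℝ (coadjointOrbit lam)} := by
    refine convexHull_min ?_ ?_
    · rintro _ ⟨σ, rfl⟩
      apply subset_convexHull
      rw [mem_orbit_iff lam h0]
      refine ⟨(1 : Matrix (Fin n) (Fin n) ℂ).submatrix id σ.symm, unitary_submatrix _ (one_mem _) _, ?_⟩
      rw [Matrix.permMatrix_mulVec]
      have h1 : dg lam = diagonal ((fun j => ((lam (σ j) : ℝ) : ℂ)) ∘ σ.symm) := by
        rw [dg]; congr 1; ext j; simp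
      rw [h1, diag_perm]
      simp [dg, Function.comp]
    · intro A hA B hB a b ha hb hab
      simp only [Set.mem_ofPred_eq] at hA hB ⊢
      have : dg ((a • A + b • B) *ᵥ lam) = a • dg (A *ᵥ lam) + b • dg (B *ᵥ lam) := by
        rw [Matrix.add_mulVec, Matrix.smul_mulVec, Matrix.smul_mulVec]
        ext i j
        by_cases h : i = j
        · subst h; simp [dg]
        · simp [dg, h]
      rw [this]
      exact convex_convexHull ℝ _ hA hB ha hb hab
  exact hsub hD'

end HornAux

namespace HornAux

open Matrix
open scoped ComplexOrder

lemma PS_add {n : ℕ} (v w : Fin n → ℝ) (k : Fin n) : PS (v + w) k = PS v k + PS w k := by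
  rw [PS, PS, PS, ← Finset.sum_add_distrib]
  refine Finset.sum_congr rfl fun j _ => ?_
  split_ifs <;> simp

lemma PS_smul {n : ℕ} (t : ℝ) (w : Fin n → ℝ) (k : Fin n) : PS (t • w) k = t * PS w k := by
  rw [PS, PS, Finset.mul_sum]
  refine Finset.sum_congr rfl fun j _ => ?_
  split_ifs <;> simp

lemma PS_single {n : ℕ} (a k : Fin n) : PS (Pi.single a 1) k = if a ≤ k then 1 else 0 := by
  rw [PS, Finset.sum_eq_single a]
  · simp
  · intro b _ hb; simp [hb]
  · simp

lemma PS_last {n : ℕ} (v : Fin n → ℝ) (k : Fin n) (hk : (k : ℕ) + 1 = n) : PS v k = ∑ j, v j := by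
  rw [PS]
  refine Finset.sum_congr rfl fun j _ => ?_
  rw [if_pos]
  rw [Fin.le_def]; omega

lemma PS_succ {n : ℕ} (v : Fin n → ℝ) (k k' : Fin n) (hk : (k' : ℕ) = k + 1) : PS v k' = PS v k + v k' := by
  have : v k' = ∑ j, if j = k' then v j else 0 := by simp
  rw [PS, PS, this, ← Finset.sum_add_distrib]
  refine Finset.sum_congr rfl fun j _ => ?_
  by_cases h1 : j ≤ k'
  · by_cases h2 : j = k'
    · subst h2
      have : ¬ j ≤ k := by rw [Fin.le_def]; omega
      simp [this]
    · have : j ≤ k := by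
        rw [Fin.le_def] at *
        have := Fin.val_ne_of_ne h2
        omega
      simp [h1, h2, this]
  · have h2 : j ≠ k' := fun h => h1 h.le
    have : ¬ j ≤ k := by rw [Fin.le_def] at *; omega
    simp [h1, h2, this]

lemma PS_zero {n : ℕ} (v : Fin n → ℝ) (k : Fin n) (hk : (k : ℕ) = 0) : PS v k = v k := by
  rw [PS, Finset.sum_eq_single k]
  · simp
  · intro b _ hb
    rw [if_neg]
    intro h
    apply hb
    rw [Fin.le_def] at h
    ext; omega
  · simp

lemma eq_of_PS {n : ℕ} (v w : Fin n → ℝ) (h : ∀ k, PS v k = PS w k) : v = w := by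
  ext k
  rcases Nat.eq_zero_or_pos (k : ℕ) with h0 | h0
  · have := h k
    rwa [PS_zero v k h0, PS_zero w k h0] at this
  · let k0 : Fin n := ⟨k - 1, by omega⟩
    have hk : (k : ℕ) = k0 + 1 := by simp [k0]; omega
    have h1 := h k
    rw [PS_succ v k0 k hk, PS_succ w k0 k hk, h k0] at h1
    linarith

/-- The elementary averaging matrix. -/
noncomputable def TT {n : ℕ} (t : ℝ) (j j' : Fin n) : Matrix (Fin n) (Fin n) ℝ :=
  (1 - t) • 1 + t • (Equiv.swap j j').permMatrix ℝ

lemma TT_mem {n : ℕ} (t : ℝ) (h0 : 0 ≤ t) (h1 : t ≤ 1) (j j' : Fin n) :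
    TT t j j' ∈ doublyStochastic ℝ (Fin n) := by
  exact convex_doublyStochastic (one_mem _) permMatrix_mem_doublyStochastic
    (sub_nonneg.2 h1) h0 (by ring)

lemma TT_mulVec {n : ℕ} (t : ℝ) (j j' : Fin n) (hj : j ≠ j') (x : Fin n → ℝ) :
    TT t j j' *ᵥ x = x + (t * (x j - x j')) • (Pi.single j' 1 + (-1 : ℝ) • Pi.single j 1) := by
  rw [TT, Matrix.add_mulVec, Matrix.smul_mulVec, Matrix.smul_mulVec, Matrix.one_mulVec, Matrix.permMatrix_mulVec]
  ext a
  simp only [Pi.add_apply, Pi.smul_apply, smul_eq_mul, Function.comp]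
  by_cases h1 : a = j
  · subst h1
    simp [hj]; ring
  · by_cases h2 : a = j'
    · subst h2
      simp [hj.symm]; ring
    · rw [Equiv.swap_apply_of_ne_of_ne h1 h2]
      simp [h1, h2]; ring

lemma TT_antitone {n : ℕ} (t : ℝ) (h0 : 0 ≤ t) (h1 : t ≤ 1 / 2) (j j' : Fin n) (hj : (j' : ℕ) = j + 1)
    (x : Fin n → ℝ) (hx : Antitone x) : Antitone (TT t j j' *ᵥ x) := by
  have hne : j ≠ j' := by intro h; rw [h] at hj; omega
  rw [TT_mulVec t j j' hne]
  have hd : x j' ≤ x j := hx (by rw [Fin.le_def]; omega)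
  have hval : ∀ a, (x + (t * (x j - x j')) • (Pi.single j' 1 + (-1 : ℝ) • Pi.single j 1) : Fin n → ℝ) a =
      if a = j then x j - t * (x j - x j') else if a = j' then x j' + t * (x j - x j') else x a := by
    intro a
    by_cases h1 : a = j
    · subst h1
      simp [hne]; ring
    · by_cases h2 : a = j'
      · subst h2
        simp [hne.symm]
      · simp [h1, h2]
  have hp : 0 ≤ t * (x j - x j') := mul_nonneg h0 (sub_nonneg.2 hd)
  have hp2 : t * (x j - x j') ≤ (x j - x j') / 2 := by nlinarith
  intro a b hab
  rw [hval, hval]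
  rw [Fin.le_def] at hab
  by_cases ha : a = j
  · rw [if_pos ha]
    by_cases hb : b = j
    · rw [if_pos hb]
    · rw [if_neg hb]
      by_cases hb' : b = j'
      · rw [if_pos hb']; linarith
      · rw [if_neg hb']
        have h3 := Fin.val_ne_of_ne hb
        subst ha
        have : x b ≤ x j' := hx (by rw [Fin.le_def]; omega)
        linarith
  · rw [if_neg ha]
    by_cases ha' : a = j'
    · rw [if_pos ha']
      by_cases hb : b = j
      · subst ha' hb; omega
      · rw [if_neg hb]
        by_cases hb' : b = j'
        · rw [if_pos hb']
        · rw [if_neg hb']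
          subst ha'
          have : x b ≤ x a := hx hab
          linarith
    · rw [if_neg ha']
      have h3 := Fin.val_ne_of_ne ha
      have h4 := Fin.val_ne_of_ne ha'
      by_cases hb : b = j
      · rw [if_pos hb]
        subst hb
        have : x b ≤ x a := hx hab
        linarith
      · rw [if_neg hb]
        by_cases hb' : b = j'
        · rw [if_pos hb']
          subst hb'
          have : x j ≤ x a := hx (by rw [Fin.le_def]; omega)
          linarith
        · rw [if_neg hb']; exact hx hab

lemma isCompact_doublyStochastic (n : ℕ) :
    IsCompact (doublyStochastic ℝ (Fin n) : Set (Matrix (Fin n) (Fin n) ℝ)) := by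
  rw [doublyStochastic_eq_convexHull_permMatrix]
  exact (Set.finite_range (fun σ : Equiv.Perm (Fin n) => σ.permMatrix ℝ)).isCompact_convexHull ℝ

lemma continuous_PS {n : ℕ} (ξ : Fin n → ℝ) (k : Fin n) :
    Continuous fun D : Matrix (Fin n) (Fin n) ℝ => PS (D *ᵥ ξ) k := by
  unfold PS
  refine continuous_finsetSum _ fun j _ => ?_
  split_ifs
  · have : Continuous fun D : Matrix (Fin n) (Fin n) ℝ => D *ᵥ ξ := by fun_prop
    exact (continuous_apply j).comp this
  · exact continuous_const

lemma exists_D {n : ℕ} (ξ κ : Fin n → ℝ) (hκ : Antitone κ)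
    (hPS : ∀ k, PS κ k ≤ PS ξ k) (hsum : ∑ i, κ i = ∑ i, ξ i) :
    ∃ D ∈ doublyStochastic ℝ (Fin n), (∀ x : Fin n → ℝ, Antitone x → Antitone (D *ᵥ x)) ∧ D *ᵥ ξ = κ := by
  let S : Set (Matrix (Fin n) (Fin n) ℝ) := (doublyStochastic ℝ (Fin n) : Set (Matrix (Fin n) (Fin n) ℝ)) ∩
    {D | (∀ x : Fin n → ℝ, Antitone x → ∀ a b, a ≤ b → (D *ᵥ x) b ≤ (D *ᵥ x) a) ∧ ∀ k, PS κ k ≤ PS (D *ᵥ ξ) k}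
  have hS : IsCompact S := by
    refine (isCompact_doublyStochastic n).inter_right ?_
    have hc : ∀ x : Fin n → ℝ, ∀ a, Continuous fun D : Matrix (Fin n) (Fin n) ℝ => (D *ᵥ x) a := by
      intro x a
      have : Continuous fun D : Matrix (Fin n) (Fin n) ℝ => D *ᵥ x := by fun_prop
      exact (continuous_apply a).comp this
    have h1 : IsClosed (⋂ x : Fin n → ℝ, ⋂ _ : Antitone x, ⋂ a : Fin n, ⋂ b : Fin n, ⋂ _ : a ≤ b,
        {D : Matrix (Fin n) (Fin n) ℝ | (D *ᵥ x) b ≤ (D *ᵥ x) a}) :=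
      isClosed_iInter fun x => isClosed_iInter fun _ => isClosed_iInter fun a => isClosed_iInter fun b =>
        isClosed_iInter fun _ => isClosed_le (hc x b) (hc x a)
    have h2 : IsClosed (⋂ k, {D : Matrix (Fin n) (Fin n) ℝ | PS κ k ≤ PS (D *ᵥ ξ) k}) :=
      isClosed_iInter fun k => isClosed_le continuous_const (continuous_PS ξ k)
    convert h1.inter h2 using 1
    ext D
    simp only [Set.mem_inter_iff, Set.mem_iInter, Set.mem_ofPred_eq]
  have hne : S.Nonempty := by
    refine ⟨1, one_mem (doublyStochastic ℝ (Fin n)), ?_, ?_⟩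
    · intro x hx a b hab
      rw [Matrix.one_mulVec]; exact hx hab
    · intro k; rw [Matrix.one_mulVec]; exact hPS k
  obtain ⟨D, ⟨hD, hDa, hDm⟩, hmin⟩ := hS.exists_isMinOn hne
    (f := fun D => ∑ k, PS (D *ᵥ ξ) k) (continuous_finsetSum _ fun k _ => continuous_PS ξ k).continuousOn
  refine ⟨D, hD, fun x hx a b hab => hDa x hx a b hab, ?_⟩
  have hD' : D ∈ doublyStochastic ℝ (Fin n) := hD
  set ν := D *ᵥ ξ with hν
  by_contra hcon
  have hνs : ∑ i, κ i = ∑ i, ν i := by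
    rw [hν, sum_mulVec_of_mem_doublyStochastic hD', hsum]
  have hex : ∃ k, PS κ k < PS ν k := by
    by_contra hno
    push Not at hno
    exact hcon (eq_of_PS _ _ fun k => le_antisymm (hno k) (hDm k))
  obtain ⟨k0, hk0⟩ := hex
  obtain ⟨m, _, hm⟩ := Finset.exists_max_image Finset.univ (fun k => PS ν k - PS κ k) ⟨k0, Finset.mem_univ _⟩
  -- first maximizer
  let F := Finset.univ.filter fun k => PS ν k - PS κ k = PS ν m - PS κ m
  have hF : F.Nonempty := ⟨m, by simp [F]⟩
  set j := F.min' hF with hj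
  have hjF : PS ν j - PS κ j = PS ν m - PS κ m := by
    have := F.min'_mem hF
    simpa [F] using this
  have hjpos : 0 < PS ν j - PS κ j := by
    rw [hjF]
    have := hm k0 (Finset.mem_univ _)
    linarith
  have hjmax : ∀ k, PS ν k - PS κ k ≤ PS ν j - PS κ j := fun k => by
    rw [hjF]; exact hm k (Finset.mem_univ _)
  have hjlt : (j : ℕ) + 1 < n := by
    by_contra h
    have h1 : (j : ℕ) + 1 = n := by omega
    rw [PS_last ν j h1, PS_last κ j h1, hνs] at hjpos
    linarith
  let j' : Fin n := ⟨j + 1, hjlt⟩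
  have hj' : (j' : ℕ) = j + 1 := rfl
  have hνj : κ j < ν j := by
    rcases Nat.eq_zero_or_pos (j : ℕ) with h0 | h0
    · rw [PS_zero ν j h0, PS_zero κ j h0] at hjpos
      linarith
    · let i : Fin n := ⟨j - 1, by omega⟩
      have hi : (j : ℕ) = i + 1 := by simp [i]; omega
      have h1 : PS ν i - PS κ i < PS ν j - PS κ j := by
        refine lt_of_le_of_ne (hjmax i) fun h => ?_
        have : i ∈ F := by simp only [F, Finset.mem_filter, Finset.mem_univ, true_and]; rw [h, hjF]
        have := F.min'_le i this
        rw [← hj, Fin.le_def] at this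
        omega
      rw [PS_succ ν i j hi, PS_succ κ i j hi] at h1
      linarith
  have hνj' : ν j' ≤ κ j' := by
    have h1 := hjmax j'
    rw [PS_succ ν j j' hj', PS_succ κ j j' hj'] at h1
    linarith
  have hκj : κ j' ≤ κ j := hκ (by rw [Fin.le_def]; omega)
  have hΔ : 0 < ν j - ν j' := by linarith
  set t : ℝ := min (1 / 2) ((PS ν j - PS κ j) / (ν j - ν j')) with ht
  have ht0 : 0 < t := lt_min (by norm_num) (div_pos hjpos hΔ)
  have ht1 : t ≤ 1 / 2 := min_le_left _ _
  have ht2 : t * (ν j - ν j') ≤ PS ν j - PS κ j := by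
    rw [← le_div_iff₀ hΔ]; exact min_le_right _ _
  have hne' : j ≠ j' := by intro h; have := congrArg Fin.val h; omega
  have hPSnew : ∀ k, PS (TT t j j' *ᵥ ν) k = PS ν k - if k = j then t * (ν j - ν j') else 0 := by
    intro k
    rw [TT_mulVec t j j' hne', PS_add, PS_smul, PS_add, PS_smul, PS_single, PS_single]
    by_cases hk : k = j
    · have : ¬ j' ≤ j := by rw [Fin.le_def]; omega
      rw [hk]
      simp [this]; ring
    · rw [if_neg hk]
      have h3 := Fin.val_ne_of_ne hk
      by_cases h4 : j ≤ k
      · have : j' ≤ k := by rw [Fin.le_def] at *; omega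
        simp [h4, this]
      · have : ¬ j' ≤ k := by rw [Fin.le_def] at *; omega
        simp [h4, this]
  have hnew : TT t j j' * D ∈ S := by
    refine ⟨mul_mem (TT_mem t ht0.le (by linarith) j j') hD', ?_, ?_⟩
    · intro x hx a b hab
      rw [← Matrix.mulVec_mulVec]
      exact TT_antitone t ht0.le ht1 j j' hj' (D *ᵥ x) (fun a b hab => hDa x hx a b hab) hab
    · intro k
      rw [← Matrix.mulVec_mulVec, ← hν, hPSnew]
      split_ifs with hk
      · subst hk; linarith
      · rw [sub_zero]; exact hDm k
  have h1 := hmin hnew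
  simp only [Set.mem_ofPred_eq, ← Matrix.mulVec_mulVec, ← hν, hPSnew, Finset.sum_sub_distrib] at h1
  simp at h1
  have := mul_pos ht0 hΔ
  linarith

lemma hull_sub {n r : ℕ} (hr : 1 ≤ r) (lam mu : Fin n → ℝ) (hl : Antitone lam) (hl0 : ∑ i, lam i = 0)
    (hlc : Convex ℝ (partialConvexHull r (coadjointOrbit lam)))
    (hm : Antitone mu) (hm0 : ∑ i, mu i = 0)
    (hmc : Convex ℝ (partialConvexHull r (coadjointOrbit mu))) :
    convexHull ℝ (coadjointOrbit (lam + mu)) ⊆ partialConvexHull r (coadjointOrbit (lam + mu)) := by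
  intro B hB
  have h0 : ∑ i, (lam + mu) i = 0 := by
    simp only [Pi.add_apply, Finset.sum_add_distrib, hl0, hm0, add_zero]
  have hBh := herm_hull _ B hB
  obtain ⟨W, hW, σ, hσ, hE⟩ := spectral_sorted B hBh
  set κ : Fin n → ℝ := hBh.eigenvalues ∘ σ with hκ
  have hE' : B = W * dg κ * Wᴴ := hE
  have hWW : Wᴴ * W = 1 := Matrix.mem_unitaryGroup_iff'.1 hW
  have hdk : dg κ ∈ convexHull ℝ (coadjointOrbit (lam + mu)) := by
    have h1 := conj_hull (lam + mu) h0 B hB Wᴴ (Unitary.star_mem hW)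
    rw [Matrix.conjTranspose_conjTranspose] at h1
    have h2 : Wᴴ * B * W = dg κ := by
      calc Wᴴ * B * W = Wᴴ * (W * dg κ * Wᴴ) * W := by rw [← hE']
        _ = (Wᴴ * W) * dg κ * (Wᴴ * W) := by simp only [Matrix.mul_assoc]
        _ = dg κ := by rw [hWW]; simp
    rwa [h2] at h1
  obtain ⟨hps, hs0⟩ := hull_PS (lam + mu) (hl.add hm) h0 κ hdk
  obtain ⟨D, hD, hDa, hDk⟩ := exists_D (lam + mu) κ hσ hps (hs0.trans h0.symm)
  have h1 := HH_of_mem hr lam hl hl0 hlc (D *ᵥ lam) (hDa _ hl) (birkhoff_hull lam hl0 D hD)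
  have h2 := HH_of_mem hr mu hm hm0 hmc (D *ᵥ mu) (hDa _ hm) (birkhoff_hull mu hm0 D hD)
  have h3 := h1.add (fam_antitone (by
      intro a b hab
      simp only [Pi.smul_apply, nsmul_eq_mul]
      exact mul_le_mul_of_nonneg_left (hDa _ hl hab) (Nat.cast_nonneg _)) (fun _ => hl))
    (fam_antitone (by
      intro a b hab
      simp only [Pi.smul_apply, nsmul_eq_mul]
      exact mul_le_mul_of_nonneg_left (hDa _ hm hab) (Nat.cast_nonneg _)) (fun _ => hm)) h2
  rw [fam_add, ← smul_add, ← Matrix.mulVec_add, hDk] at h3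
  rw [hE']
  exact mem_of_HH hr (lam + mu) h0 κ h3 W hW

lemma pch_zero {n r : ℕ} (hr : 1 ≤ r) :
    Convex ℝ (partialConvexHull r (coadjointOrbit (0 : Fin n → ℝ))) := by
  have h0 : coadjointOrbit (0 : Fin n → ℝ) = {0} := by
    ext A
    rw [mem_orbit_iff _ (by simp)]
    have hz : dg (0 : Fin n → ℝ) = 0 := by simp [dg]
    rw [hz]
    constructor
    · rintro ⟨U, _, rfl⟩; simp
    · intro h
      exact ⟨1, one_mem _, by simpa using h⟩
  have h1 : partialConvexHull r (coadjointOrbit (0 : Fin n → ℝ)) = {0} := by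
    rw [h0]
    apply Set.Subset.antisymm
    · refine pch_subset_hull.trans ?_
      simp
    · rintro _ rfl
      exact ⟨fun _ => 0, fun _ => rfl, subset_convexHull ℝ _ ⟨⟨0, hr⟩, rfl⟩⟩
  rw [h1]
  exact convex_singleton 0

lemma pch_smul {n r : ℕ} (c : ℝ) (hc : 0 < c) (lam : Fin n → ℝ) (h0 : ∑ i, lam i = 0)
    (h : Convex ℝ (partialConvexHull r (coadjointOrbit lam))) :
    Convex ℝ (partialConvexHull r (coadjointOrbit (c • lam))) := by
  have h0' : ∑ i, (c • lam) i = 0 := by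
    simp only [Pi.smul_apply, smul_eq_mul, ← Finset.mul_sum, h0, mul_zero]
  have hO : ∀ A, A ∈ coadjointOrbit (c • lam) ↔ c⁻¹ • A ∈ coadjointOrbit lam := by
    intro A
    rw [mem_orbit_iff _ h0', mem_orbit_iff _ h0]
    refine exists_congr fun U => and_congr_right fun _ => ?_
    rw [smul_dg]
    constructor
    · rintro rfl
      rw [smul_smul, inv_mul_cancel₀ hc.ne', one_smul]
    · intro h
      rw [← h, smul_smul, mul_inv_cancel₀ hc.ne', one_smul]
  have hP : partialConvexHull r (coadjointOrbit (c • lam)) =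
      (fun A : Matrix (Fin n) (Fin n) ℂ => c⁻¹ • A) ⁻¹' partialConvexHull r (coadjointOrbit lam) := by
    ext B
    rw [Set.mem_preimage, mem_pch, mem_pch]
    constructor
    · rintro ⟨f, hf, t, h1, h2, h3⟩
      refine ⟨fun i => c⁻¹ • f i, fun i => (hO _).1 (hf i), t, h1, h2, ?_⟩
      rw [← h3, Finset.smul_sum]
      exact Finset.sum_congr rfl fun i _ => smul_comm _ _ _
    · rintro ⟨f, hf, t, h1, h2, h3⟩
      refine ⟨fun i => c • f i, fun i => (hO _).2 ?_, t, h1, h2, ?_⟩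
      · rw [smul_smul, inv_mul_cancel₀ hc.ne', one_smul]; exact hf i
      · have h4 : B = c • (c⁻¹ • B) := by rw [smul_smul, mul_inv_cancel₀ hc.ne', one_smul]
        rw [h4, ← h3, Finset.smul_sum]
        exact Finset.sum_congr rfl fun i _ => smul_comm _ _ _
  rw [hP]
  exact h.is_linear_preimage (IsLinearMap.isLinearMap_smul _)

end HornAux

/-- The set `𝔠_r` of decreasing trace-free `λ ∈ ℝ^n` for which `C_r(O_λ)` is convex
is a convex cone: it contains `0`, is closed under addition, and under multiplication
by nonnegative scalars. -/
theorem Cr_isConvexCone (n : ℕ) (hn : 2 ≤ n) (r : ℕ) (hr : 1 ≤ r) :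
    (0 : Fin n → ℝ) ∈ {lam : Fin n → ℝ | Antitone lam ∧ ∑ i, lam i = 0 ∧
        Convex ℝ (partialConvexHull r (coadjointOrbit lam))} ∧
    (∀ lam mu : Fin n → ℝ,
      lam ∈ {lam : Fin n → ℝ | Antitone lam ∧ ∑ i, lam i = 0 ∧
        Convex ℝ (partialConvexHull r (coadjointOrbit lam))} →
      mu ∈ {lam : Fin n → ℝ | Antitone lam ∧ ∑ i, lam i = 0 ∧
        Convex ℝ (partialConvexHull r (coadjointOrbit lam))} →
      lam + mu ∈ {lam : Fin n → ℝ | Antitone lam ∧ ∑ i, lam i = 0 ∧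
        Convex ℝ (partialConvexHull r (coadjointOrbit lam))}) ∧
    (∀ (c : ℝ), 0 ≤ c → ∀ lam : Fin n → ℝ,
      lam ∈ {lam : Fin n → ℝ | Antitone lam ∧ ∑ i, lam i = 0 ∧
        Convex ℝ (partialConvexHull r (coadjointOrbit lam))} →
      c • lam ∈ {lam : Fin n → ℝ | Antitone lam ∧ ∑ i, lam i = 0 ∧
        Convex ℝ (partialConvexHull r (coadjointOrbit lam))}) := by
  refine ⟨⟨antitone_const, by simp, HornAux.pch_zero hr⟩, ?_, ?_⟩
  · rintro lam mu ⟨hl, hl0, hlc⟩ ⟨hm, hm0, hmc⟩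
    refine ⟨hl.add hm, by simp [Finset.sum_add_distrib, hl0, hm0], ?_⟩
    rw [Set.Subset.antisymm HornAux.pch_subset_hull
      (HornAux.hull_sub hr lam mu hl hl0 hlc hm hm0 hmc)]
    exact convex_convexHull ℝ _
  · rintro c hc lam ⟨hl, hl0, hlc⟩
    rcases hc.eq_or_lt with h | h
    · subst h
      rw [zero_smul]
      exact ⟨antitone_const, by simp, HornAux.pch_zero hr⟩
    · refine ⟨fun a b hab => mul_le_mul_of_nonneg_left (hl hab) hc, ?_, HornAux.pch_smul c h lam hl0 hlc⟩
      simp only [Pi.smul_apply, smul_eq_mul, ← Finset.mul_sum, hl0, mul_zero]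
end

section
/- Let n ≥ 2 and let λ ∈ ℝ^n satisfy λ_1 ≥ … ≥ λ_n and λ_1+…+λ_n = 0. Then the n-th partial convex hull of O_λ equals the convex hull of O_λ: C_n(O_λ) = Conv(O_λ). (Here n = ℓ+1 where ℓ = n−1 is the rank of SU(n).) -/
open Matrix in
/-- Two finite families with the same multiset of values differ by a permutation. -/
lemma exists_perm_of_map_eq {n : ℕ} (f g : Fin n → ℝ)
    (h : Multiset.map f Finset.univ.val = Multiset.map g Finset.univ.val) :
    ∃ σ : Equiv.Perm (Fin n), ∀ i, g (σ i) = f i := by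
  have key : ∀ c : ℝ, Nonempty ({a // f a = c} ≃ {b // g b = c}) := by
    intro c
    apply Fintype.card_eq.mp
    have := congrArg (Multiset.count c) h
    rw [Multiset.count_map, Multiset.count_map] at this
    rw [Fintype.card_subtype, Fintype.card_subtype]
    simp only [Finset.card_def, Finset.filter_val]
    simpa only [eq_comm] using this
  let e := fun c => (key c).some
  exact ⟨Equiv.ofFiberEquiv e, fun i => Equiv.ofFiberEquiv_map e i⟩

open Matrix in
lemma conj_diagonal_mem_orbit {n : ℕ} (lam mu : Fin n → ℝ) (hsum : ∑ i, lam i = 0)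
    (τ : Equiv.Perm (Fin n)) (hmu : mu = lam ∘ τ)
    (U : Matrix (Fin n) (Fin n) ℂ) (hU : star U * U = 1) :
    U * diagonal (fun i => (mu i : ℂ)) * star U ∈ coadjointOrbit lam := by
  have hH : (U * diagonal (fun i => (mu i : ℂ)) * star U).IsHermitian := by
    rw [star_eq_conjTranspose]
    apply isHermitian_mul_mul_conjTranspose
    rw [IsHermitian, diagonal_conjTranspose]
    congr 1
    ext i
    simp
  refine ⟨?_, hH, ?_⟩
  · rw [trace_mul_comm, ← mul_assoc, hU, one_mul, trace_diagonal, ← Complex.ofReal_sum, hmu]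
    simp only [Function.comp]
    rw [Equiv.sum_comp τ lam, hsum]
    simp
  · have h1 := hH.roots_charpoly_eq_eigenvalues
    rw [charpoly_mul_comm, ← mul_assoc, hU, one_mul, charpoly_diagonal, Polynomial.roots_prod _ _
      (by simp [Finset.prod_ne_zero_iff, Polynomial.X_sub_C_ne_zero])] at h1
    have h2 := congrArg (Multiset.map Complex.re) h1
    simp only [Polynomial.roots_X_sub_C, Multiset.bind_singleton, Multiset.map_map] at h2
    have h3 : Multiset.map mu Finset.univ.val = Multiset.map hH.eigenvalues Finset.univ.val := by
      simpa [Function.comp_def] using h2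
    obtain ⟨σ, hσ⟩ := exists_perm_of_map_eq _ _ h3
    refine ⟨τ.symm.trans σ, fun i => ?_⟩
    exact (hσ (τ.symm i)).trans (by rw [congrFun hmu]; simp)

open Matrix in
lemma mulVec_perm_mem_convexHull {n : ℕ} (lam mu : Fin n → ℝ) (τ : Equiv.Perm (Fin n))
    (hmu : mu = lam ∘ τ) (D : Matrix (Fin n) (Fin n) ℝ) (hD : D ∈ doublyStochastic ℝ (Fin n)) :
    D *ᵥ mu ∈ convexHull ℝ (Set.range fun σ : Equiv.Perm (Fin n) => lam ∘ σ) := by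
  obtain ⟨w, hw0, hw1, rfl⟩ := exists_eq_sum_perm_of_mem_doublyStochastic hD
  rw [sum_mulVec]
  simp only [smul_mulVec, permMatrix_mulVec]
  refine (convex_convexHull ℝ _).sum_mem (fun σ _ => hw0 σ) hw1 fun σ _ => ?_
  apply subset_convexHull
  exact ⟨σ.trans τ, by ext i; simp [hmu]⟩

open Matrix in
/-- Schur: the diagonal of a unitary conjugate of a point of the orbit. -/
lemma schur_diag {n : ℕ} (lam : Fin n → ℝ) (A : Matrix (Fin n) (Fin n) ℂ)
    (hA : A ∈ coadjointOrbit lam) (U : Matrix (Fin n) (Fin n) ℂ)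
    (hU : star U * U = 1) (hU' : U * star U = 1) :
    (fun i => ((star U * A * U) i i).re) ∈
      convexHull ℝ (Set.range fun σ : Equiv.Perm (Fin n) => lam ∘ σ) := by
  obtain ⟨-, hH, σ, hσ⟩ := hA
  set V : Matrix (Fin n) (Fin n) ℂ := (hH.eigenvectorUnitary).1 with hV
  have hV1 : V * star V = 1 := mem_unitaryGroup_iff.mp hH.eigenvectorUnitary.2
  have hV2 : star V * V = 1 := mem_unitaryGroup_iff'.mp hH.eigenvectorUnitary.2
  have hspec : A = V * diagonal (fun i => (hH.eigenvalues i : ℂ)) * star V := by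
    have := hH.spectral_theorem
    rw [Unitary.conjStarAlgAut_apply] at this
    exact this
  have hmu : hH.eigenvalues = lam ∘ σ.symm := by
    ext i; simp [← hσ]
  set W := star U * V with hW
  have hW1 : W * star W = 1 := by
    rw [hW, star_mul, star_star, mul_assoc, ← mul_assoc V, hV1, one_mul, hU]
  have hW2 : star W * W = 1 := by
    rw [hW, star_mul, star_star, mul_assoc, ← mul_assoc U, hU', one_mul, hV2]
  have hD : (Matrix.of fun i j => Complex.normSq (W i j)) ∈ doublyStochastic ℝ (Fin n) := by
    rw [mem_doublyStochastic_iff_sum]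
    refine ⟨fun i j => Complex.normSq_nonneg _, fun i => ?_, fun j => ?_⟩
    · have := congrFun (congrFun hW1 i) i
      rw [mul_apply] at this
      simp only [star_apply, one_apply_eq, Complex.star_def, Complex.mul_conj] at this
      simp only [of_apply]
      exact_mod_cast this
    · have := congrFun (congrFun hW2 j) j
      rw [mul_apply] at this
      simp only [star_apply, one_apply_eq, Complex.star_def, mul_comm, Complex.mul_conj] at this
      simp only [of_apply]
      exact_mod_cast this
  convert mulVec_perm_mem_convexHull lam _ _ hmu _ hD using 1
  ext i
  have : star U * A * U = W * diagonal (fun i => (hH.eigenvalues i : ℂ)) * star W := by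
    rw [hW, star_mul, star_star]
    conv_lhs => rw [hspec]
    simp only [mul_assoc]
  rw [this, mul_apply]
  simp only [mul_diagonal, star_apply, mulVec, dotProduct, of_apply, Complex.re_sum]
  refine Finset.sum_congr rfl fun j _ => ?_
  rw [mul_right_comm, Complex.star_def, Complex.mul_conj, ← Complex.ofReal_mul, Complex.ofReal_re]

/-- Carathéodory in the sum-zero hyperplane. -/
lemma caratheodory_sum_zero {n : ℕ} (hn : 2 ≤ n) (P : Set (Fin n → ℝ))
    (hP : ∀ v ∈ P, ∑ i, v i = 0) (x : Fin n → ℝ) (hx : x ∈ convexHull ℝ P) :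
    ∃ f : Fin n → (Fin n → ℝ), (∀ i, f i ∈ P) ∧ x ∈ convexHull ℝ (Set.range f) := by
  rw [convexHull_eq_union] at hx
  simp only [Set.mem_iUnion] at hx
  obtain ⟨t, ht, hind, hxt⟩ := hx
  have hle := hind.card_le_finrank_succ
  let L : (Fin n → ℝ) →ₗ[ℝ] ℝ := ∑ i, LinearMap.proj i
  have hL : ∀ v, L v = ∑ i, v i := fun v => by simp [L]
  have hsub : vectorSpan ℝ (Set.range ((↑) : t → (Fin n → ℝ))) ≤ LinearMap.ker L := by
    rw [vectorSpan_def, Submodule.span_le]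
    rintro _ ⟨a, ⟨a, rfl⟩, b, ⟨b, rfl⟩, rfl⟩
    simp [hL, hP _ (ht a.2), hP _ (ht b.2)]
  have hlt : Module.finrank ℝ (LinearMap.ker L) < Module.finrank ℝ (Fin n → ℝ) := by
    apply Submodule.finrank_lt
    intro h
    have : (fun _ => 1 : Fin n → ℝ) ∈ LinearMap.ker L := by rw [h]; trivial
    rw [LinearMap.mem_ker, hL] at this
    simp at this
    omega
  have h2 := Submodule.finrank_mono hsub
  rw [Module.finrank_fin_fun] at hlt
  have hcard : Fintype.card t ≤ Fintype.card (Fin n) := by rw [Fintype.card_fin]; omega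
  obtain ⟨e⟩ := Function.Embedding.nonempty_of_card_le hcard
  have hne : Nonempty t := by
    have : (t : Set (Fin n → ℝ)).Nonempty := (convexHull_nonempty_iff (𝕜 := ℝ)).mp ⟨x, hxt⟩
    exact this.to_subtype
  refine ⟨fun i => (Function.invFun e i : t), fun i => ht (Function.invFun e i).2, ?_⟩
  refine convexHull_mono ?_ hxt
  intro y hy
  exact ⟨e ⟨y, hy⟩, by simp [Function.leftInverse_invFun e.injective _]⟩

/-- For decreasing trace-free `λ ∈ ℝ^n`, the `n`-th partial convex hull of `O_λ`
equals the convex hull of `O_λ`. -/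
theorem partialConvexHull_n_eq_convexHull (n : ℕ) (hn : 2 ≤ n)
    (lam : Fin n → ℝ) (hmono : Antitone lam) (hsum : ∑ i, lam i = 0) :
    partialConvexHull n (coadjointOrbit lam) = convexHull ℝ (coadjointOrbit lam) := by
  apply Set.Subset.antisymm
  · rintro y ⟨f, hf, hy⟩
    exact convexHull_mono (Set.range_subset_iff.mpr hf) hy
  intro A hA
  have hH : A.IsHermitian := by
    have : convexHull ℝ (coadjointOrbit lam) ⊆
        (selfAdjoint.submodule ℝ (Matrix (Fin n) (Fin n) ℂ) : Set _) :=
      convexHull_min (fun B hB => hB.2.1) (Submodule.convex _)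
    exact this hA
  set U : Matrix (Fin n) (Fin n) ℂ := (hH.eigenvectorUnitary).1 with hUdef
  have hU1 : U * star U = 1 := Matrix.mem_unitaryGroup_iff.mp hH.eigenvectorUnitary.2
  have hU2 : star U * U = 1 := Matrix.mem_unitaryGroup_iff'.mp hH.eigenvectorUnitary.2
  have hspec : A = U * Matrix.diagonal (fun i => (hH.eigenvalues i : ℂ)) * star U := by
    have := hH.spectral_theorem
    rw [Unitary.conjStarAlgAut_apply] at this
    exact this
  let P : Set (Fin n → ℝ) := Set.range fun σ : Equiv.Perm (Fin n) => lam ∘ σ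
  let F : Matrix (Fin n) (Fin n) ℂ →ₗ[ℝ] (Fin n → ℝ) :=
    { toFun := fun B i => ((star U * B * U) i i).re
      map_add' := fun B C => by ext i; simp [mul_add, add_mul]
      map_smul' := fun c B => by ext i; simp }
  let G : (Fin n → ℝ) →ₗ[ℝ] Matrix (Fin n) (Fin n) ℂ :=
    { toFun := fun v => U * Matrix.diagonal (fun i => (v i : ℂ)) * star U
      map_add' := fun v w => by
        rw [← add_mul, ← mul_add, Matrix.diagonal_add]
        simp
      map_smul' := fun c v => by
        rw [RingHom.id_apply, ← smul_mul_assoc, ← mul_smul_comm, ← Matrix.diagonal_smul]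
        congr 3
        ext i
        simp }
  have hFA : F A = hH.eigenvalues := by
    ext i
    change ((star U * A * U) i i).re = _
    have : star U * A * U = Matrix.diagonal (fun i => (hH.eigenvalues i : ℂ)) := by
      conv_lhs => rw [hspec]
      rw [mul_assoc, mul_assoc, hU2, mul_one, ← mul_assoc, hU2, one_mul]
    rw [this]
    simp
  have hmem : hH.eigenvalues ∈ convexHull ℝ P := by
    rw [← hFA]
    have : convexHull ℝ (coadjointOrbit lam) ⊆ F ⁻¹' (convexHull ℝ P) :=
      convexHull_min (fun B hB => schur_diag lam B hB U hU2 hU1)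
        ((convex_convexHull ℝ P).linear_preimage F)
    exact this hA
  obtain ⟨f, hf, hx⟩ := caratheodory_sum_zero hn P (by
    rintro _ ⟨σ, rfl⟩
    simp only [Function.comp]
    rw [Equiv.sum_comp σ lam, hsum]) _ hmem
  refine ⟨fun i => G (f i), fun i => ?_, ?_⟩
  · obtain ⟨τ, hτ⟩ := hf i
    exact conj_diagonal_mem_orbit lam (f i) hsum τ hτ.symm U hU2
  · have hGA : A = G hH.eigenvalues := hspec
    rw [hGA]
    have := Set.mem_image_of_mem G hx
    rw [LinearMap.image_convexHull, ← Set.range_comp] at this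
    exact this
end

section
/- Let n ≥ 2 and let λ ∈ ℝ^n satisfy λ_1 ≥ … ≥ λ_n, λ_1+…+λ_n = 0 and λ ≠ 0. Then 0 ∈ C_2(O_λ) if and only if λ is self-dual, i.e. λ_i = −λ_{n+1−i} for all 1 ≤ i ≤ n. -/
open Polynomial in
theorem perm_of_prod_eq {n : ℕ} (f g : Fin n → ℝ)
    (h : ∏ i, (X - C (f i : ℂ)) = ∏ i, (X - C (g i : ℂ))) :
    ∃ σ : Equiv.Perm (Fin n), f ∘ σ = g := by
  have h2 := congrArg Polynomial.roots h
  have hr : ∀ k : Fin n → ℝ, (∏ i, (X - C (k i : ℂ))).roots =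
      Multiset.map (fun i => (k i : ℂ)) Finset.univ.val := fun k => by
    rw [Polynomial.roots_prod _ _ (Finset.prod_ne_zero_iff.2 fun i _ => X_sub_C_ne_zero _)]
    simp [Multiset.bind_singleton]
  rw [hr, hr] at h2
  have h3 := congrArg (Multiset.map Complex.re) h2
  simp only [Multiset.map_map, Function.comp_def, Complex.ofReal_re] at h3
  have hp : (List.ofFn f).Perm (List.ofFn g) := by
    rw [← Multiset.coe_eq_coe, ← Fin.univ_val_map, ← Fin.univ_val_map]
    exact h3
  have e : f ∘ Tuple.sort f = g ∘ Tuple.sort g := by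
    apply List.ofFn_injective
    exact (((Tuple.sort f).ofFn_comp_perm f).trans
      (hp.trans ((Tuple.sort g).ofFn_comp_perm g).symm)).eq_of_pairwise'
      (Tuple.monotone_sort f).sortedLE_ofFn.pairwise
      (Tuple.monotone_sort g).sortedLE_ofFn.pairwise
  refine ⟨(Tuple.sort g).symm.trans (Tuple.sort f), ?_⟩
  ext i
  have := congrFun e ((Tuple.sort g).symm i)
  simpa using this

theorem exists_diag {n : ℕ} {A : Matrix (Fin n) (Fin n) ℂ} (hA : A.IsHermitian) :
    ∃ U V : Matrix (Fin n) (Fin n) ℂ, V * U = 1 ∧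
      A = U * Matrix.diagonal (fun i => (hA.eigenvalues i : ℂ)) * V := by
  refine ⟨hA.eigenvectorUnitary, star (hA.eigenvectorUnitary : Matrix (Fin n) (Fin n) ℂ),
    Unitary.coe_star_mul_self _, ?_⟩
  conv_lhs => rw [hA.spectral_theorem, Unitary.conjStarAlgAut_apply]
  rfl

theorem trace_sq {n : ℕ} {A : Matrix (Fin n) (Fin n) ℂ} {lam : Fin n → ℝ}
    (h : A ∈ coadjointOrbit lam) : (A * A).trace = ((∑ i, lam i ^ 2 : ℝ) : ℂ) := by
  obtain ⟨-, hA, σ, hσ⟩ := h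
  obtain ⟨U, V, hVU, hAU⟩ := exists_diag hA
  set D := Matrix.diagonal (fun i => (hA.eigenvalues i : ℂ)) with hD
  have : A * A = U * (D * D * V) := by
    rw [hAU]
    calc U * D * V * (U * D * V) = U * D * (V * U) * D * V := by simp only [Matrix.mul_assoc]
      _ = _ := by rw [hVU]; simp only [Matrix.mul_assoc, Matrix.mul_one]
  rw [this, Matrix.trace_mul_comm, Matrix.mul_assoc, hVU, Matrix.mul_one, hD,
    Matrix.diagonal_mul_diagonal, Matrix.trace_diagonal, ← Equiv.sum_comp σ]
  push_cast
  refine Finset.sum_congr rfl fun i _ => ?_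
  rw [hσ, sq]

open Polynomial in
theorem charpoly_mem {n : ℕ} {A : Matrix (Fin n) (Fin n) ℂ} {lam : Fin n → ℝ}
    (h : A ∈ coadjointOrbit lam) : A.charpoly = ∏ i, (X - C (lam i : ℂ)) := by
  obtain ⟨-, hA, σ, hσ⟩ := h
  rw [hA.charpoly_eq, ← Equiv.prod_comp σ]
  exact Finset.prod_congr rfl fun i _ => by rw [hσ]; rfl

open Polynomial in
theorem charpoly_neg_mem {n : ℕ} {A : Matrix (Fin n) (Fin n) ℂ} {lam : Fin n → ℝ}
    (h : A ∈ coadjointOrbit lam) :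
    (-A).charpoly = ∏ i, (X - C ((-lam i : ℝ) : ℂ)) := by
  obtain ⟨-, hA, σ, hσ⟩ := h
  obtain ⟨U, V, hVU, hAU⟩ := exists_diag hA
  have : -A = U * (Matrix.diagonal (fun i => ((-hA.eigenvalues i : ℝ) : ℂ)) * V) := by
    conv_lhs => rw [hAU]
    rw [← Matrix.mul_assoc, ← Matrix.neg_mul, ← Matrix.mul_neg, Matrix.diagonal_neg]
    congr 3
    ext i
    simp
  rw [this, Matrix.charpoly_mul_comm, Matrix.mul_assoc, hVU, Matrix.mul_one,
    Matrix.charpoly_diagonal, ← Equiv.prod_comp σ]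
  exact Finset.prod_congr rfl fun i _ => by rw [hσ]

theorem diag_mem {n : ℕ} (lam mu : Fin n → ℝ) (τ : Equiv.Perm (Fin n))
    (hmu : ∀ i, mu (τ i) = lam i) (hsum : ∑ i, lam i = 0) :
    Matrix.diagonal (fun i => (mu i : ℂ)) ∈ coadjointOrbit lam := by
  have hA : (Matrix.diagonal (fun i => (mu i : ℂ))).IsHermitian := by
    rw [Matrix.isHermitian_diagonal_iff]
    intro i
    exact Complex.conj_ofReal _
  refine ⟨?_, hA, ?_⟩
  · rw [Matrix.trace_diagonal, ← Equiv.sum_comp τ]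
    simp only [hmu]
    exact_mod_cast hsum
  · have h1 := hA.charpoly_eq
    rw [Matrix.charpoly_diagonal] at h1
    obtain ⟨σ, hσ⟩ := perm_of_prod_eq hA.eigenvalues mu h1.symm
    refine ⟨τ.trans σ, fun i => ?_⟩
    exact (congrFun hσ (τ i)).trans (hmu i)

/-- For decreasing trace-free `λ ≠ 0`, `0 ∈ C_2(O_λ)` iff `λ` is self-dual,
i.e. `λ_i = -λ_{n+1-i}` for all `i`. -/
theorem zero_mem_partialConvexHull_two_iff_selfDual (n : ℕ) (hn : 2 ≤ n)
    (lam : Fin n → ℝ) (hmono : Antitone lam) (hsum : ∑ i, lam i = 0)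
    (hne : lam ≠ 0) :
    (0 : Matrix (Fin n) (Fin n) ℂ) ∈ partialConvexHull 2 (coadjointOrbit lam) ↔
      ∀ i : Fin n, lam i = -lam i.rev := by
  constructor
  · rintro ⟨f, hf, h0⟩
    have hr : Set.range f = {f 0, f 1} := by
      ext x
      simp [Fin.exists_fin_two, eq_comm]
    rw [hr, convexHull_pair] at h0
    obtain ⟨a, b, ha, hb, hab, h0⟩ := h0
    have hS : (∑ i, lam i ^ 2) ≠ 0 := by
      intro h
      apply hne
      rw [Finset.sum_eq_zero_iff_of_nonneg (fun i _ => sq_nonneg _)] at h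
      ext i
      simpa using h i (Finset.mem_univ i)
    have hE : a • f 0 = -(b • f 1) := eq_neg_of_add_eq_zero_left h0
    have hT : (a * a) * (∑ i, lam i ^ 2) = (b * b) * (∑ i, lam i ^ 2) := by
      have h1 : ((a • f 0) * (a • f 0)).trace = ((b • f 1) * (b • f 1)).trace := by
        rw [hE, neg_mul_neg]
      simp only [smul_mul_smul_comm, Matrix.trace_smul, trace_sq (hf _), Complex.real_smul] at h1
      exact_mod_cast h1
    have h2 := mul_right_cancel₀ hS hT
    have h3 : a = b := by nlinarith
    have ha0 : a ≠ 0 := by intro h; linarith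
    have hB : f 1 = -f 0 := by
      rw [← h3, ← smul_neg] at hE
      have := smul_right_injective _ ha0 hE
      rw [this, neg_neg]
    have hc := charpoly_neg_mem (hf 0)
    rw [← hB, charpoly_mem (hf 1)] at hc
    obtain ⟨σ, hσ⟩ := perm_of_prod_eq lam (fun i => -lam i) hc
    have key : lam ∘ (Equiv.refl _ : Equiv.Perm (Fin n)) = lam ∘ (Fin.revPerm.trans σ) := by
      apply Tuple.unique_antitone
      · exact hmono
      · intro i j hij
        have e : ∀ k, lam (σ k) = -lam k := fun k => congrFun hσ k
        simp only [Function.comp_apply, Equiv.trans_apply, Fin.revPerm_apply, e]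
        exact neg_le_neg (hmono (Fin.rev_le_rev.2 hij))
    intro i
    have := congrFun key i
    have e := congrFun hσ i.rev
    simpa using this.trans e
  · intro h
    refine ⟨![Matrix.diagonal (fun i => (lam i : ℂ)), Matrix.diagonal (fun i => (lam i.rev : ℂ))],
      ?_, ?_⟩
    · rw [Fin.forall_fin_two]
      exact ⟨diag_mem lam lam (Equiv.refl _) (fun _ => rfl) hsum,
        diag_mem lam (fun i => lam i.rev) Fin.revPerm (fun i => by simp) hsum⟩
    · rw [Matrix.range_cons, Matrix.range_cons, Matrix.range_empty, Set.union_empty,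
        Set.singleton_union, convexHull_pair]
      refine ⟨1 / 2, 1 / 2, by norm_num, by norm_num, by norm_num, ?_⟩
      rw [← smul_add, Matrix.diagonal_add]
      have : (fun i => (lam i : ℂ) + (lam i.rev : ℂ)) = 0 := by
        ext i
        rw [h i]
        simp
      rw [this]
      simp
end
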